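/- arXiv:1105.4430 — 2 statements merged into one kernel-verified Lean document; each statement's English description precedes it below -/
import Mathlib

section
/- Let p, q > 0, a ∈ ℝ and λ ≥ −a²/2, and let h be a strictly positive C² function on ℝ³ with Δ_a h = λ·h, where Δ_a is the Laplacian with vertical drift a on Sol(p,q). Then there exist nonnegative C² functions h₁, h₂ : ℝ² → ℝ with Δ^{H(p)}_a h₁ = λ·h₁ and Δ^{H(q)}_{−a} h₂ = λ·h₂, such that h(x,y,z) = h₁(x,z) + h₂(y,−z) for all (x,y,z) ∈ ℝ³. -/
open Real

/-- The Laplacian with vertical drift `a` on `Sol(p,q) ≡ ℝ³`: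
`Δ_a f = (1/2)(e^{2pz} f_xx + e^{−2qz} f_yy + f_zz) + a f_z`. -/
noncomputable def solLap (p q a : ℝ) (f : ℝ × ℝ × ℝ → ℝ) (w : ℝ × ℝ × ℝ) : ℝ :=
  (1/2) * (Real.exp (2*p*w.2.2) * iteratedDeriv 2 (fun t => f (t, w.2.1, w.2.2)) w.1
    + Real.exp (-(2*q*w.2.2)) * iteratedDeriv 2 (fun t => f (w.1, t, w.2.2)) w.2.1
    + iteratedDeriv 2 (fun t => f (w.1, w.2.1, t)) w.2.2)
  + a * deriv (fun t => f (w.1, w.2.1, t)) w.2.2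

/-- The hyperbolic Laplacian with drift `b` on the logarithmic model `H(r) ≡ ℝ²`:
`Δ^{H(r)}_b g = (1/2)(e^{2rz} g_xx + g_zz) + b g_z`. -/
noncomputable def hypLap (r b : ℝ) (g : ℝ × ℝ → ℝ) (w : ℝ × ℝ) : ℝ :=
  (1/2) * (Real.exp (2*r*w.2) * iteratedDeriv 2 (fun t => g (t, w.2)) w.1
    + iteratedDeriv 2 (fun t => g (w.1, t)) w.2)
  + b * deriv (fun t => g (w.1, t)) w.2

/-- Membership in `H⁺(Δ_a, λ)` on `Sol(p,q)`: strictly positive `C²` `λ`-eigenfunction. -/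
def IsSolEigen (p q a lam : ℝ) (h : ℝ × ℝ × ℝ → ℝ) : Prop :=
  ContDiff ℝ 2 h ∧ (∀ w, 0 < h w) ∧ ∀ w, solLap p q a h w = lam * h w

/-- A minimal element of `H⁺(Δ_a, λ)` on `Sol(p,q)`: value `1` at the origin, and any
element of `H⁺(Δ_a, λ)` dominated by it is a constant multiple of it. -/
def IsSolMinimal (p q a lam : ℝ) (h : ℝ × ℝ × ℝ → ℝ) : Prop :=
  IsSolEigen p q a lam h ∧ h (0, 0, 0) = 1 ∧
    ∀ f, IsSolEigen p q a lam f → (∀ w, f w ≤ h w) → ∃ c : ℝ, ∀ w, f w = c * h w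

/-- Membership in `H⁺(Δ^{H(r)}_b, λ)`: strictly positive `C²` `λ`-eigenfunction. -/
def IsHypEigen (r b lam : ℝ) (g : ℝ × ℝ → ℝ) : Prop :=
  ContDiff ℝ 2 g ∧ (∀ w, 0 < g w) ∧ ∀ w, hypLap r b g w = lam * g w

/-- A minimal element of `H⁺(Δ^{H(r)}_b, λ)`. -/
def IsHypMinimal (r b lam : ℝ) (g : ℝ × ℝ → ℝ) : Prop :=
  IsHypEigen r b lam g ∧ g (0, 0) = 1 ∧
    ∀ f, IsHypEigen r b lam f → (∀ w, f w ≤ g w) → ∃ c : ℝ, ∀ w, f w = c * g w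

open Real Set Filter Topology

/-! ### Second derivatives on the line -/

/-- The second derivative of a function is nonpositive at a local maximum. -/
lemma IsLocalMax.iteratedDeriv_two_nonpos {g : ℝ → ℝ} {t : ℝ} (h : IsLocalMax g t)
    (hc : ContinuousAt g t) : iteratedDeriv 2 g t ≤ 0 := by
  by_contra! hpos
  have hdd : deriv (deriv g) t > 0 := by
    simpa [iteratedDeriv_succ, iteratedDeriv_zero] using hpos
  have hmin := isLocalMin_of_deriv_deriv_pos hdd h.deriv_eq_zero hc
  have hconst : g =ᶠ[𝓝 t] fun _ => g t := by
    filter_upwards [h, hmin] with s h₁ h₂ using le_antisymm h₁ h₂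
  have := hconst.iteratedDeriv_eq 2
  rw [this] at hpos
  simp [iteratedDeriv_const] at hpos

lemma iteratedDeriv_two_eq {f f' : ℝ → ℝ} {f'' t : ℝ} (h₁ : ∀ s, HasDerivAt f (f' s) s)
    (h₂ : HasDerivAt f' f'' t) : iteratedDeriv 2 f t = f'' := by
  have : deriv f = f' := funext fun s => (h₁ s).deriv
  rw [iteratedDeriv_succ, iteratedDeriv_one, this, h₂.deriv]

/-- A positive function whose logarithmic derivative is bounded by `c` grows at most like
`exp (c * |t|)`. -/
lemma le_mul_exp_of_abs_deriv_le {f : ℝ → ℝ} {c : ℝ} (hf : Differentiable ℝ f)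
    (hpos : ∀ t, 0 < f t) (hd : ∀ t, |deriv f t| ≤ c * f t) (s t : ℝ) :
    f t ≤ f s * exp (c * |t - s|) := by
  have h := Convex.norm_image_sub_le_of_norm_deriv_le (f := fun r => log (f r)) (s := univ)
    (x := s) (y := t) (C := c) (fun r _ => (hf r).log (hpos r).ne')
    (fun r _ => by
      rw [deriv.log (hf r) (hpos r).ne', norm_eq_abs, abs_div, abs_of_pos (hpos r),
        div_le_iff₀ (hpos r)]
      exact hd r) convex_univ (mem_univ _) (mem_univ _)
  have hlog : log (f t) ≤ log (f s) + c * |t - s| := by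
    have := (le_abs_self _).trans h
    rw [norm_eq_abs] at this
    linarith
  rw [← exp_log (hpos t), ← exp_log (hpos s), ← exp_add]
  exact exp_le_exp.2 hlog

/-- Interpolation of the first derivative between the function and its second derivative. -/
lemma abs_deriv_le_of_abs_le {f : ℝ → ℝ} {t d M B : ℝ} (hf : ContDiff ℝ 2 f) (hd : 0 < d)
    (hM : ∀ s, |s - t| ≤ d → |f s| ≤ M) (hB : ∀ s, |s - t| ≤ d → |iteratedDeriv 2 f s| ≤ B) :
    |deriv f t| ≤ 2 * M / d + B * d := by
  have hf1 : Differentiable ℝ f := hf.differentiable (by norm_num)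
  have hf2 : Differentiable ℝ (deriv f) := hf.differentiable_deriv_two
  obtain ⟨c, hc, hc'⟩ := exists_deriv_eq_slope f (show t < t + d by linarith)
    hf1.continuous.continuousOn hf1.differentiableOn
  have hct : |c - t| ≤ d := by rw [abs_of_pos (by linarith [hc.1])]; linarith [hc.2]
  have hslope : |deriv f c| ≤ 2 * M / d := by
    rw [hc', add_sub_cancel_left, abs_div, abs_of_pos hd]
    gcongr
    have h1 := hM (t + d) (by simp [abs_of_pos hd])
    have h2 := hM t (by simp [hd.le])
    have h3 := abs_sub (f (t + d)) (f t)
    linarith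
  have hmv := Convex.norm_image_sub_le_of_norm_deriv_le (f := deriv f)
    (s := Metric.closedBall t d) (x := c) (y := t) (C := B) (fun r _ => hf2 r)
    (fun r hr => by
      have := hB r hr
      rwa [iteratedDeriv_succ, iteratedDeriv_one] at this) (convex_closedBall _ _)
    hct (Metric.mem_closedBall_self hd.le)
  rw [norm_eq_abs, norm_eq_abs, abs_sub_comm t c] at hmv
  have hB0 : 0 ≤ B := (abs_nonneg _).trans (hB t (by simp [hd.le]))
  have := abs_sub_abs_le_abs_sub (deriv f t) (deriv f c)
  nlinarith

/-! ### The driftless operator and its solutions -/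

/-- The operator `e^{2pz} ∂²/∂x² + e^{-2qz} ∂²/∂y² + ∂²/∂z²`. -/
noncomputable def solOp (p q : ℝ) (f : ℝ × ℝ × ℝ → ℝ) (w : ℝ × ℝ × ℝ) : ℝ :=
  exp (2 * p * w.2.2) * iteratedDeriv 2 (fun t => f (t, w.2.1, w.2.2)) w.1
    + exp (-(2 * q * w.2.2)) * iteratedDeriv 2 (fun t => f (w.1, t, w.2.2)) w.2.1
    + iteratedDeriv 2 (fun t => f (w.1, w.2.1, t)) w.2.2

lemma solOp_add {p q : ℝ} {f g : ℝ × ℝ × ℝ → ℝ} (hf : ContDiff ℝ 2 f) (hg : ContDiff ℝ 2 g)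
    (w : ℝ × ℝ × ℝ) : solOp p q (fun w => f w + g w) w = solOp p q f w + solOp p q g w := by
  unfold solOp
  rw [iteratedDeriv_fun_add (by push_cast; fun_prop) (by push_cast; fun_prop),
    iteratedDeriv_fun_add (by push_cast; fun_prop) (by push_cast; fun_prop),
    iteratedDeriv_fun_add (by push_cast; fun_prop) (by push_cast; fun_prop)]
  ring

lemma solOp_const_mul {p q : ℝ} (c : ℝ) (f : ℝ × ℝ × ℝ → ℝ) (w : ℝ × ℝ × ℝ) :
    solOp p q (fun w => c * f w) w = c * solOp p q f w := by
  unfold solOp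
  simp only [iteratedDeriv_const_mul_field]
  ring

lemma solOp_sub {p q : ℝ} {f g : ℝ × ℝ × ℝ → ℝ} (hf : ContDiff ℝ 2 f) (hg : ContDiff ℝ 2 g)
    (w : ℝ × ℝ × ℝ) : solOp p q (fun w => f w - g w) w = solOp p q f w - solOp p q g w := by
  unfold solOp
  rw [iteratedDeriv_fun_sub (by push_cast; fun_prop) (by push_cast; fun_prop),
    iteratedDeriv_fun_sub (by push_cast; fun_prop) (by push_cast; fun_prop),
    iteratedDeriv_fun_sub (by push_cast; fun_prop) (by push_cast; fun_prop)]
  ring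

/-- `C²` solutions of `solOp p q u = k * u`. -/
structure IsSol (p q k : ℝ) (u : ℝ × ℝ × ℝ → ℝ) : Prop where
  contDiff : ContDiff ℝ 2 u
  eq : ∀ w, solOp p q u w = k * u w

namespace IsSol

variable {p q k : ℝ} {u v : ℝ × ℝ × ℝ → ℝ}

lemma add (hu : IsSol p q k u) (hv : IsSol p q k v) : IsSol p q k (fun w => u w + v w) :=
  ⟨hu.contDiff.add hv.contDiff, fun w => by
    rw [solOp_add hu.contDiff hv.contDiff, hu.eq, hv.eq]; ring⟩

lemma sub (hu : IsSol p q k u) (hv : IsSol p q k v) : IsSol p q k (fun w => u w - v w) :=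
  ⟨hu.contDiff.sub hv.contDiff, fun w => by
    rw [solOp_sub hu.contDiff hv.contDiff, hu.eq, hv.eq]; ring⟩

lemma const_mul (c : ℝ) (hu : IsSol p q k u) : IsSol p q k (fun w => c * u w) :=
  ⟨contDiff_const.mul hu.contDiff, fun w => by rw [solOp_const_mul, hu.eq]; ring⟩

/-- Solutions are preserved by reflections in the first coordinate. -/
lemma reflect (hu : IsSol p q k u) (c : ℝ) :
    IsSol p q k (fun w => u (c - w.1, w.2.1, w.2.2)) := by
  refine ⟨hu.contDiff.comp (by fun_prop), fun w => ?_⟩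
  rw [← hu.eq]
  simp only [solOp]
  rw [iteratedDeriv_comp_const_sub 2 (fun t => u (t, w.2.1, w.2.2)) c]
  simp

/-- Solutions are exchanged by the isometry interchanging the two horizontal coordinates. -/
lemma swap (hu : IsSol p q k u) : IsSol q p k (fun w => u (w.2.1, w.1, -w.2.2)) := by
  refine ⟨hu.contDiff.comp (by fun_prop), fun w => ?_⟩
  rw [← hu.eq]
  simp only [solOp]
  rw [iteratedDeriv_comp_neg 2 (fun t => u (w.2.1, w.1, t))]
  simp
  ring

/-- Solutions are preserved by the left translations of the group `Sol(p,q)`. -/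
lemma translate (hu : IsSol p q k u) (x₀ y₀ z₀ : ℝ) :
    IsSol p q k (fun w =>
      u (x₀ + exp (p * z₀) * w.1, y₀ + exp (-(q * z₀)) * w.2.1, z₀ + w.2.2)) := by
  refine ⟨hu.contDiff.comp (by fun_prop), fun w => ?_⟩
  have hC := hu.contDiff
  rw [← hu.eq]
  simp only [solOp]
  rw [iteratedDeriv_comp_const_add 2 (fun t => u (_, _, t)),
    iteratedDeriv_comp_const_mul
      (f := fun t => u (x₀ + t, y₀ + exp (-(q * z₀)) * w.2.1, z₀ + w.2.2))
      (by push_cast; fun_prop) (exp (p * z₀)),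
    iteratedDeriv_comp_const_add 2 (fun t => u (t, _, _)),
    iteratedDeriv_comp_const_mul
      (f := fun t => u (x₀ + exp (p * z₀) * w.1, y₀ + t, z₀ + w.2.2))
      (by push_cast; fun_prop) (exp (-(q * z₀))),
    iteratedDeriv_comp_const_add 2 (fun t => u (_, t, _))]
  have e₁ : exp (2 * p * (z₀ + w.2.2)) = exp (2 * p * w.2.2) * exp (p * z₀) ^ 2 := by
    rw [← exp_nat_mul, ← exp_add]; congr 1; push_cast; ring
  have e₂ : exp (-(2 * q * (z₀ + w.2.2))) =
      exp (-(2 * q * w.2.2)) * exp (-(q * z₀)) ^ 2 := by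
    rw [← exp_nat_mul, ← exp_add]; congr 1; push_cast; ring
  rw [e₁, e₂]
  ring

/-- Solutions are preserved by horizontal translations. -/
lemma translate_horizontal (hu : IsSol p q k u) (s t : ℝ) :
    IsSol p q k (fun w => u (w.1 + s, w.2.1 + t, w.2.2)) := by
  simpa [add_comm] using hu.translate s t 0

end IsSol

/-! ### The maximum principle -/

/-- A function that is subharmonic for `solOp p q` wherever it is positive, and positive only in
the interior of a compact set, is nonpositive on that set. -/
lemma nonpos_of_solOp_pos {p q : ℝ} {K : Set (ℝ × ℝ × ℝ)} (hK : IsCompact K)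
    {f : ℝ × ℝ × ℝ → ℝ} (hf : Continuous f)
    (h : ∀ w ∈ K, 0 < f w → K ∈ 𝓝 w ∧ 0 < solOp p q f w) : ∀ w ∈ K, f w ≤ 0 := by
  by_contra! hcon
  obtain ⟨w₀, hw₀, hpos⟩ := hcon
  obtain ⟨⟨x, y, z⟩, hw, hmax⟩ := hK.exists_isMaxOn ⟨w₀, hw₀⟩ hf.continuousOn
  obtain ⟨hnhds, hop⟩ := h _ hw (hpos.trans_le (hmax hw₀))
  have hloc : IsLocalMax f (x, y, z) := hmax.isLocalMax hnhds
  have line : ∀ (c : ℝ → ℝ × ℝ × ℝ) (t : ℝ), Continuous c → c t = (x, y, z) →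
      iteratedDeriv 2 (fun s => f (c s)) t ≤ 0 := by
    intro c t hc hct
    refine IsLocalMax.iteratedDeriv_two_nonpos ?_ (hf.comp hc).continuousAt
    have : Tendsto c (𝓝 t) (𝓝 (x, y, z)) := hct ▸ hc.continuousAt
    filter_upwards [this.eventually hloc] with s hs
    rwa [hct]
  have h₁ := line (fun t => (t, y, z)) x (by fun_prop) rfl
  have h₂ := line (fun t => (x, t, z)) y (by fun_prop) rfl
  have h₃ := line (fun t => (x, y, t)) z (by fun_prop) rfl
  have e₁ := mul_nonpos_of_nonneg_of_nonpos (exp_pos (2 * p * z)).le h₁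
  have e₂ := mul_nonpos_of_nonneg_of_nonpos (exp_pos (-(2 * q * z))).le h₂
  simp only [solOp] at hop
  linarith

/-! ### Interior derivative estimates -/

/-- A bound for the coefficients of `solOp p q` and their inverses on the slab `|z| ≤ 3`. -/
noncomputable def ellipticity (p q : ℝ) : ℝ := exp (6 * (p + q))

section Ellipticity

variable {p q : ℝ}

lemma ellipticity_comm : ellipticity p q = ellipticity q p := by
  simp only [ellipticity, add_comm]

lemma one_lt_ellipticity (hp : 0 < p) (hq : 0 < q) : 1 < ellipticity p q :=
  one_lt_exp_iff.2 (by positivity)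

lemma exp_fst_le_ellipticity (hp : 0 < p) (hq : 0 < q) {z : ℝ} (hz : |z| ≤ 3) :
    exp (2 * p * z) ≤ ellipticity p q :=
  exp_le_exp.2 (by nlinarith [abs_le.1 hz])

lemma exp_snd_le_ellipticity (hp : 0 < p) (hq : 0 < q) {z : ℝ} (hz : |z| ≤ 3) :
    exp (-(2 * q * z)) ≤ ellipticity p q :=
  exp_le_exp.2 (by nlinarith [abs_le.1 hz])

lemma one_le_ellipticity_mul_exp_fst (hp : 0 < p) (hq : 0 < q) {z : ℝ} (hz : |z| ≤ 3) :
    1 ≤ ellipticity p q * exp (2 * p * z) := by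
  rw [ellipticity, ← exp_add]
  exact one_le_exp (by nlinarith [abs_le.1 hz])

lemma one_le_ellipticity_mul_exp_snd (hp : 0 < p) (hq : 0 < q) {z : ℝ} (hz : |z| ≤ 3) :
    1 ≤ ellipticity p q * exp (-(2 * q * z)) := by
  rw [ellipticity, ← exp_add]
  exact one_le_exp (by nlinarith [abs_le.1 hz])

end Ellipticity

/-- The sup-norm box of radius `d` around `w`, described coordinatewise. -/
lemma abs_sub_le_of_mem_closedBall {w w' : ℝ × ℝ × ℝ} {d : ℝ}
    (h : w' ∈ Metric.closedBall w d) :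
    |w'.1 - w.1| ≤ d ∧ |w'.2.1 - w.2.1| ≤ d ∧ |w'.2.2 - w.2.2| ≤ d := by
  rw [mem_closedBall_iff_norm, norm_prod_le_iff, norm_prod_le_iff] at h
  simpa using h

lemma mem_closedBall_of_abs_sub_le {x y z x' y' z' d : ℝ} (h₁ : |x' - x| ≤ d)
    (h₂ : |y' - y| ≤ d) (h₃ : |z' - z| ≤ d) :
    (x', y', z') ∈ Metric.closedBall (x, y, z) d := by
  rw [mem_closedBall_iff_norm, norm_prod_le_iff, norm_prod_le_iff]
  simpa using ⟨h₁, h₂, h₃⟩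

lemma iteratedDeriv_two_quadratic (a b c s t : ℝ) :
    iteratedDeriv 2 (fun r => a + b * (r - s) + c * (r - s) ^ 2) t = 2 * c := by
  refine iteratedDeriv_two_eq (f' := fun r => b + 2 * c * (r - s)) (fun r => ?_) ?_
  · have h := (((hasDerivAt_id r).sub_const s).const_mul b).const_add a |>.add
      ((((hasDerivAt_id r).sub_const s).pow 2).const_mul c)
    refine (h.congr_deriv ?_).congr_of_eventuallyEq ?_
    · simp; ring
    · exact Eventually.of_forall fun _ => by simp
  · have h := (((hasDerivAt_id t).sub_const s).const_mul (2 * c)).const_add b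
    refine (h.congr_deriv ?_).congr_of_eventuallyEq ?_
    · simp
    · exact Eventually.of_forall fun _ => by simp

namespace IsSol

variable {p q k : ℝ} {u : ℝ × ℝ × ℝ → ℝ}

lemma sub_reflect_le (hp : 0 < p) (hq : 0 < q) (hk : 0 ≤ k) (hu : IsSol p q k u)
    {x y z d M : ℝ} (hz : |z| ≤ 2) (hd : 0 < d) (hd1 : d ≤ 1) (hM : 0 < M)
    (hb : ∀ w ∈ Metric.closedBall (x, y, z) d, |u w| ≤ M) {t : ℝ} (ht : t ∈ Icc 0 d) :
    u (x + t, y, z) - u (x - t, y, z) ≤ (6 * ellipticity p q ^ 2 + 2) * (M / d) * t := by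
  set Θ := ellipticity p q with hΘ
  have hΘ1 : 1 < Θ := one_lt_ellipticity hp hq
  set m := M / d ^ 2 with hm
  have hm0 : 0 < m := by positivity
  have hmd : m * d ^ 2 = M := by rw [hm]; field_simp
  set ψ : ℝ × ℝ × ℝ → ℝ := fun w => (6 * Θ ^ 2 + 2) * m * d * (w.1 - x)
    - 6 * Θ ^ 2 * m * (w.1 - x) ^ 2 + 2 * m * ((w.2.1 - y) ^ 2 + (w.2.2 - z) ^ 2) with hψ
  have hψC : ContDiff ℝ 2 ψ := by fun_prop
  have hvS := hu.sub (hu.reflect (2 * x))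
  set K : Set (ℝ × ℝ × ℝ) := Icc x (x + d) ×ˢ (Icc (y - d) (y + d) ×ˢ Icc (z - d) (z + d))
  have hK : IsCompact K := isCompact_Icc.prod (isCompact_Icc.prod isCompact_Icc)
  have hop : ∀ w, solOp p q ψ w = -(12 * Θ ^ 2 * m * exp (2 * p * w.2.2))
      + 4 * m * (exp (-(2 * q * w.2.2)) + 1) := by
    intro w
    have h₁ : iteratedDeriv 2 (fun r => ψ (r, w.2.1, w.2.2)) w.1 = -(12 * Θ ^ 2 * m) := by
      rw [show (fun r => ψ (r, w.2.1, w.2.2)) = fun r =>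
        2 * m * ((w.2.1 - y) ^ 2 + (w.2.2 - z) ^ 2) + (6 * Θ ^ 2 + 2) * m * d * (r - x)
          + (-(6 * Θ ^ 2 * m)) * (r - x) ^ 2 by funext r; simp only [hψ]; ring,
        iteratedDeriv_two_quadratic]
      ring
    have h₂ : iteratedDeriv 2 (fun r => ψ (w.1, r, w.2.2)) w.2.1 = 4 * m := by
      rw [show (fun r => ψ (w.1, r, w.2.2)) = fun r =>
        ((6 * Θ ^ 2 + 2) * m * d * (w.1 - x) - 6 * Θ ^ 2 * m * (w.1 - x) ^ 2
          + 2 * m * (w.2.2 - z) ^ 2) + 0 * (r - y)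
          + 2 * m * (r - y) ^ 2 by funext r; simp only [hψ]; ring,
        iteratedDeriv_two_quadratic]
      ring
    have h₃ : iteratedDeriv 2 (fun r => ψ (w.1, w.2.1, r)) w.2.2 = 4 * m := by
      rw [show (fun r => ψ (w.1, w.2.1, r)) = fun r =>
        ((6 * Θ ^ 2 + 2) * m * d * (w.1 - x) - 6 * Θ ^ 2 * m * (w.1 - x) ^ 2
          + 2 * m * (w.2.1 - y) ^ 2) + 0 * (r - z)
          + 2 * m * (r - z) ^ 2 by funext r; simp only [hψ]; ring,
        iteratedDeriv_two_quadratic]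
      ring
    rw [solOp, h₁, h₂, h₃]
    ring
  have key := nonpos_of_solOp_pos (p := p) (q := q) hK
    (f := fun w => (u w - u (2 * x - w.1, w.2.1, w.2.2)) - ψ w)
    (hvS.contDiff.sub hψC).continuous ?_ (x + t, y, z)
    ⟨⟨by linarith [ht.1], by linarith [ht.2]⟩, ⟨by linarith, by linarith⟩,
      ⟨by linarith, by linarith⟩⟩
  · have e₁ : 2 * x - (x + t) = x - t := by ring
    have e₂ : (6 * Θ ^ 2 + 2) * m * d * t = (6 * Θ ^ 2 + 2) * (M / d) * t := by
      rw [hm]; field_simp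
    simp only [hψ, e₁, sub_self, add_sub_cancel_left] at key
    have := mul_nonneg (mul_nonneg (sq_nonneg Θ) hm0.le) (sq_nonneg t)
    nlinarith
  · rintro ⟨x', y', z'⟩ ⟨⟨hx₁, hx₂⟩, ⟨hy₁, hy₂⟩, ⟨hz₁, hz₂⟩⟩ hpos
    dsimp only at hx₁ hx₂ hy₁ hy₂ hz₁ hz₂ hpos
    have hbd : u (x', y', z') - u (2 * x - x', y', z') ≤ 2 * M := by
      have h₁ := hb (x', y', z') (mem_closedBall_of_abs_sub_le
        (abs_le.2 ⟨by linarith, by linarith⟩) (abs_le.2 ⟨by linarith, by linarith⟩)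
        (abs_le.2 ⟨by linarith, by linarith⟩))
      have h₂ := hb (2 * x - x', y', z') (mem_closedBall_of_abs_sub_le
        (abs_le.2 ⟨by linarith, by linarith⟩) (abs_le.2 ⟨by linarith, by linarith⟩)
        (abs_le.2 ⟨by linarith, by linarith⟩))
      linarith [(abs_le.1 h₁).2, (abs_le.1 h₂).1]
    have hψge : 2 * m * (d * (x' - x) + (y' - y) ^ 2 + (z' - z) ^ 2) ≤ ψ (x', y', z') := by
      have : 0 ≤ 6 * Θ ^ 2 * m * ((x' - x) * (d - (x' - x))) :=
        mul_nonneg (by positivity) (mul_nonneg (by linarith) (by linarith))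
      simp only [hψ]
      linarith
    have hz3 : |z'| ≤ 3 := by
      have := abs_le.1 hz
      exact abs_le.2 ⟨by linarith, by linarith⟩
    have hlt : d * (x' - x) + (y' - y) ^ 2 + (z' - z) ^ 2 < d ^ 2 := by
      by_contra! hcon
      nlinarith
    have hsumnn : 0 ≤ d * (x' - x) := mul_nonneg hd.le (by linarith)
    have hψ0 : 0 ≤ ψ (x', y', z') := le_trans (by positivity) hψge
    refine ⟨?_, ?_⟩
    · have hxne : x ≠ x' := by
        rintro rfl
        rw [show 2 * x - x = x by ring] at hpos
        linarith
      have hx' : x' < x + d := by nlinarith [sq_nonneg (y' - y), sq_nonneg (z' - z)]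
      have hy' := abs_lt_of_sq_lt_sq' (show (y' - y) ^ 2 < d ^ 2 by
        nlinarith [sq_nonneg (z' - z)]) hd.le
      have hz' := abs_lt_of_sq_lt_sq' (show (z' - z) ^ 2 < d ^ 2 by
        nlinarith [sq_nonneg (y' - y)]) hd.le
      exact prod_mem_nhds (Icc_mem_nhds (lt_of_le_of_ne hx₁ hxne) hx')
        (prod_mem_nhds (Icc_mem_nhds (by linarith [hy'.1]) (by linarith [hy'.2]))
          (Icc_mem_nhds (by linarith [hz'.1]) (by linarith [hz'.2])))
    · rw [solOp_sub hvS.contDiff hψC, hvS.eq, hop]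
      dsimp only
      have h₁ : 0 ≤ k * (u (x', y', z') - u (2 * x - x', y', z')) :=
        mul_nonneg hk (by linarith)
      have h₂ := exp_snd_le_ellipticity hp hq hz3
      have h₃ := one_le_ellipticity_mul_exp_fst hp hq hz3
      rw [← hΘ] at h₂ h₃
      have h₄ : Θ ≤ Θ ^ 2 * exp (2 * p * z') := by nlinarith
      have h₅ : 0 < m * (12 * (Θ ^ 2 * exp (2 * p * z')) - 4 * (exp (-(2 * q * z')) + 1)) :=
        mul_pos hm0 (by linarith)
      linarith

/-- Interior estimate for the first derivative in the first coordinate. -/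
lemma abs_deriv_fst_le (hp : 0 < p) (hq : 0 < q) (hk : 0 ≤ k) (hu : IsSol p q k u)
    {x y z d M : ℝ} (hz : |z| ≤ 2) (hd : 0 < d) (hd1 : d ≤ 1) (hM : 0 < M)
    (hb : ∀ w ∈ Metric.closedBall (x, y, z) d, |u w| ≤ M) :
    |deriv (fun t => u (t, y, z)) x| ≤ (6 * ellipticity p q ^ 2 + 2) * (M / d) := by
  have upper : ∀ {u : ℝ × ℝ × ℝ → ℝ}, IsSol p q k u →
      (∀ w ∈ Metric.closedBall (x, y, z) d, |u w| ≤ M) →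
      deriv (fun t => u (t, y, z)) x ≤ (6 * ellipticity p q ^ 2 + 2) * (M / d) := by
    intro u hu hb
    have hC := hu.contDiff
    set c := (6 * ellipticity p q ^ 2 + 2) * (M / d) with hc
    have hc0 : 0 ≤ c := by positivity
    have hdiff : HasDerivAt (fun t => u (t, y, z)) (deriv (fun t => u (t, y, z)) x) x :=
      ((show ContDiff ℝ 2 (fun t => u (t, y, z)) by fun_prop).differentiable
        (by norm_num) x).hasDerivAt
    set D := deriv (fun t => u (t, y, z)) x
    have h₁ : HasDerivAt (fun t => u (x + t, y, z)) D 0 := by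
      refine HasDerivAt.comp_const_add (f := fun t => u (t, y, z)) x 0 ?_
      simpa using hdiff
    have h₂ : HasDerivAt (fun t => u (x - t, y, z)) (-D) 0 := by
      refine HasDerivAt.comp_const_sub (f := fun t => u (t, y, z)) x 0 ?_
      simpa using hdiff
    have h₃ : D - -D ≤ c := by
      refine le_of_tendsto (h₁.sub h₂).tendsto_slope_zero_right ?_
      filter_upwards [Ioc_mem_nhdsGT hd] with t ht
      have := hu.sub_reflect_le hp hq hk hz hd hd1 hM hb ⟨ht.1.le, ht.2⟩
      rw [smul_eq_mul, inv_mul_le_iff₀ ht.1]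
      rw [← hc, mul_comm] at this
      simpa using this
    linarith
  refine abs_le.2 ⟨?_, upper hu hb⟩
  have h := upper (hu.const_mul (-1)) (fun w hw => by simpa using hb w hw)
  rw [deriv_const_mul_field] at h
  linarith

/-- Interior estimate for the second derivative in the first coordinate. -/
lemma abs_iteratedDeriv_fst_le (hp : 0 < p) (hq : 0 < q) (hk : 0 ≤ k) (hu : IsSol p q k u)
    {x y z d M : ℝ} (hz : |z| ≤ 3 / 2) (hd : 0 < d) (hd1 : d ≤ 1) (hM : 0 < M)
    (hb : ∀ w ∈ Metric.closedBall (x, y, z) d, |u w| ≤ M) :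
    |iteratedDeriv 2 (fun t => u (t, y, z)) x| ≤
      8 * (6 * ellipticity p q ^ 2 + 2) ^ 2 * (M / d ^ 2) := by
  set C := 6 * ellipticity p q ^ 2 + 2 with hC
  have hC0 : 0 < C := by positivity
  have hsm := hu.contDiff
  have hfst : ∀ w ∈ Metric.closedBall (x, y, z) (d / 2),
      |deriv (fun t => u (t, w.2.1, w.2.2)) w.1| ≤ C * (M / (d / 2)) := by
    intro w hw
    have hw' := abs_sub_le_of_mem_closedBall hw
    refine hu.abs_deriv_fst_le hp hq hk ?_ (by positivity) (by linarith) hM fun w' hw' => ?_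
    · have h₁ := abs_le.1 hw'.2.2
      have h₂ := abs_le.1 hz
      exact abs_le.2 ⟨by dsimp only at h₁; linarith, by dsimp only at h₁; linarith⟩
    · exact hb w' (Metric.closedBall_subset_closedBall' (by
        have := Metric.mem_closedBall.1 hw
        linarith) hw')
  have hquot : ∀ s ∈ Ioc 0 (d / 4), |deriv (fun t => u (t, y, z)) (x + s)
      - deriv (fun t => u (t, y, z)) x| ≤ s * (8 * C ^ 2 * (M / d ^ 2)) := by
    intro s hs
    have hS := (hu.translate_horizontal s 0).sub hu
    have hest := hS.abs_deriv_fst_le hp hq hk (x := x) (y := y) (z := z) (d := d / 4)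
      (M := C * (M / (d / 2)) * s) (by linarith) (by positivity) (by linarith)
      (by have := hs.1; positivity) ?_
    · simp only [add_zero] at hest
      rw [deriv_fun_sub (by
        have : ContDiff ℝ 2 (fun t => u (t + s, y, z)) := by fun_prop
        exact this.differentiable (by norm_num) _) (by
        have : ContDiff ℝ 2 (fun t => u (t, y, z)) := by fun_prop
        exact this.differentiable (by norm_num) _),
        deriv_comp_add_const (f := fun t => u (t, y, z))] at hest
      refine hest.trans (le_of_eq ?_)
      rw [← hC]
      field_simp
      ring
    · rintro ⟨x', y', z'⟩ hw
      have hw' := abs_sub_le_of_mem_closedBall hw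
      dsimp only at hw' ⊢
      rw [add_zero]
      have hx := abs_le.1 hw'.1
      have := Convex.norm_image_sub_le_of_norm_deriv_le (f := fun t => u (t, y', z'))
        (s := Icc (x - d / 2) (x + d / 2)) (x := x') (y := x' + s) (C := C * (M / (d / 2)))
        (fun r _ => by
          have : ContDiff ℝ 2 (fun t => u (t, y', z')) := by fun_prop
          exact this.differentiable (by norm_num) _)
        (fun r hr => hfst (r, y', z') (mem_closedBall_of_abs_sub_le
          (abs_le.2 ⟨by linarith [hr.1], by linarith [hr.2]⟩) (by linarith) (by linarith)))
        (convex_Icc _ _) ⟨by linarith, by linarith⟩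
        ⟨by linarith [hs.1], by linarith [hs.2]⟩
      simpa [abs_of_pos hs.1] using this
  have hline : ContDiff ℝ 2 (fun t => u (t, y, z)) := by fun_prop
  have hdd : HasDerivAt (deriv fun t => u (t, y, z))
      (iteratedDeriv 2 (fun t => u (t, y, z)) x) x := by
    rw [iteratedDeriv_succ, iteratedDeriv_one]
    exact (hline.differentiable_deriv_two x).hasDerivAt
  have hs := hdd.tendsto_slope_zero_right.abs
  refine le_of_tendsto hs ?_
  filter_upwards [Ioc_mem_nhdsGT (show 0 < d / 4 by positivity)] with s hs
  rw [smul_eq_mul, abs_mul, abs_of_pos (inv_pos.2 hs.1), inv_mul_le_iff₀ hs.1]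
  exact hquot s hs

end IsSol

namespace IsSol

variable {p q k : ℝ} {u : ℝ × ℝ × ℝ → ℝ}

lemma abs_swap_le {x y z d M : ℝ} (hb : ∀ w ∈ Metric.closedBall (x, y, z) d, |u w| ≤ M) :
    ∀ w ∈ Metric.closedBall (y, x, -z) d, |u (w.2.1, w.1, -w.2.2)| ≤ M := by
  intro w hw
  obtain ⟨h₁, h₂, h₃⟩ := abs_sub_le_of_mem_closedBall hw
  refine hb _ (mem_closedBall_of_abs_sub_le h₂ h₁ ?_)
  rw [← abs_neg]
  convert h₃ using 2
  dsimp only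
  ring

/-- Interior estimate for the first derivative in the second coordinate. -/
lemma abs_deriv_snd_le (hp : 0 < p) (hq : 0 < q) (hk : 0 ≤ k) (hu : IsSol p q k u)
    {x y z d M : ℝ} (hz : |z| ≤ 2) (hd : 0 < d) (hd1 : d ≤ 1) (hM : 0 < M)
    (hb : ∀ w ∈ Metric.closedBall (x, y, z) d, |u w| ≤ M) :
    |deriv (fun t => u (x, t, z)) y| ≤ (6 * ellipticity p q ^ 2 + 2) * (M / d) := by
  have := hu.swap.abs_deriv_fst_le hq hp hk (by rwa [abs_neg]) hd hd1 hM (abs_swap_le hb)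
  simpa [ellipticity_comm (p := q)] using this

/-- Interior estimate for the second derivative in the second coordinate. -/
lemma abs_iteratedDeriv_snd_le (hp : 0 < p) (hq : 0 < q) (hk : 0 ≤ k) (hu : IsSol p q k u)
    {x y z d M : ℝ} (hz : |z| ≤ 3 / 2) (hd : 0 < d) (hd1 : d ≤ 1) (hM : 0 < M)
    (hb : ∀ w ∈ Metric.closedBall (x, y, z) d, |u w| ≤ M) :
    |iteratedDeriv 2 (fun t => u (x, t, z)) y| ≤
      8 * (6 * ellipticity p q ^ 2 + 2) ^ 2 * (M / d ^ 2) := by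
  have := hu.swap.abs_iteratedDeriv_fst_le hq hp hk (by rwa [abs_neg]) hd hd1 hM
    (abs_swap_le hb)
  simpa [ellipticity_comm (p := q)] using this

/-- Interior estimate for the first derivative in the vertical coordinate. -/
lemma abs_deriv_thd_le (hp : 0 < p) (hq : 0 < q) (hk : 0 ≤ k) (hu : IsSol p q k u)
    {x y z d M : ℝ} (hz : |z| ≤ 1) (hd : 0 < d) (hd1 : d ≤ 1) (hM : 0 < M)
    (hb : ∀ w ∈ Metric.closedBall (x, y, z) d, |u w| ≤ M) :
    |deriv (fun t => u (x, y, t)) z| ≤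
      (4 + k + 64 * ellipticity p q * (6 * ellipticity p q ^ 2 + 2) ^ 2) * (M / d) := by
  set Θ := ellipticity p q with hΘ
  have hΘ1 : 1 < Θ := one_lt_ellipticity hp hq
  set C := 6 * Θ ^ 2 + 2 with hC
  have hC0 : 0 < C := by positivity
  have hsm := hu.contDiff
  have hest := abs_deriv_le_of_abs_le (f := fun t => u (x, y, t)) (t := z) (d := d / 2)
    (M := M) (B := (k + 64 * Θ * C ^ 2) * (M / d ^ 2)) (by fun_prop) (by positivity)
    (fun s hs => hb _ (mem_closedBall_of_abs_sub_le (by simpa using hd.le)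
      (by simpa using hd.le) (by linarith))) ?_
  · refine hest.trans (le_trans (le_of_eq ?_)
      (show (4 + (k + 64 * Θ * C ^ 2) / 2) * (M / d) ≤ _ from ?_))
    · field_simp
      ring
    · have : 0 ≤ 64 * Θ * C ^ 2 := by positivity
      exact mul_le_mul_of_nonneg_right (by linarith) (by positivity)
  · intro s hs
    have hs32 : |s| ≤ 3 / 2 := by
      have h₁ := abs_le.1 hs
      have h₂ := abs_le.1 hz
      exact abs_le.2 ⟨by linarith, by linarith⟩
    have hb' : ∀ w ∈ Metric.closedBall (x, y, s) (d / 2), |u w| ≤ M := fun w hw => by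
      obtain ⟨h₁, h₂, h₃⟩ := abs_sub_le_of_mem_closedBall hw
      exact hb w (mem_closedBall_of_abs_sub_le (by dsimp only at h₁; linarith)
        (by dsimp only at h₂; linarith) (by
          have := abs_sub_le w.2.2 s z
          dsimp only at h₃; linarith))
    have h₁ := hu.abs_iteratedDeriv_fst_le hp hq hk hs32 (by positivity) (by linarith) hM hb'
    have h₂ := hu.abs_iteratedDeriv_snd_le hp hq hk hs32 (by positivity) (by linarith) hM hb'
    have h₃ := hb' _ (Metric.mem_closedBall_self (by positivity))
    have heq := hu.eq (x, y, s)
    simp only [solOp] at heq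
    rw [← hΘ, ← hC] at h₁ h₂
    set X := iteratedDeriv 2 (fun t => u (t, y, s)) x
    set Y := iteratedDeriv 2 (fun t => u (x, t, s)) y
    have hexp₁ := exp_fst_le_ellipticity hp hq (show |s| ≤ 3 by linarith)
    have hexp₂ := exp_snd_le_ellipticity hp hq (show |s| ≤ 3 by linarith)
    rw [← hΘ] at hexp₁ hexp₂
    have hX : |exp (2 * p * s) * X| ≤ Θ * (8 * C ^ 2 * (M / (d / 2) ^ 2)) := by
      rw [abs_mul, abs_of_pos (exp_pos _)]; gcongr
    have hY : |exp (-(2 * q * s)) * Y| ≤ Θ * (8 * C ^ 2 * (M / (d / 2) ^ 2)) := by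
      rw [abs_mul, abs_of_pos (exp_pos _)]; gcongr
    have hU : |k * u (x, y, s)| ≤ k * (M / d ^ 2) := by
      rw [abs_mul, abs_of_nonneg hk]
      gcongr
      refine h₃.trans ((le_div_iff₀ (by positivity)).2 ?_)
      exact mul_le_of_le_one_right hM.le (pow_le_one₀ hd.le hd1)
    rw [show iteratedDeriv 2 (fun t => u (x, y, t)) s = k * u (x, y, s)
      - exp (2 * p * s) * X - exp (-(2 * q * s)) * Y by linarith]
    have e : (k + 64 * Θ * C ^ 2) * (M / d ^ 2) = k * (M / d ^ 2)
      + Θ * (8 * C ^ 2 * (M / (d / 2) ^ 2)) + Θ * (8 * C ^ 2 * (M / (d / 2) ^ 2)) := by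
      field_simp
      ring
    rw [e]
    exact (abs_sub _ _).trans (add_le_add ((abs_sub _ _).trans (add_le_add hU hX)) hY)

end IsSol

/-- Interior gradient estimate: on a box of radius `d`, the gradient at the centre is bounded by a
uniform multiple of `sup |u| / d`. -/
lemma exists_gradient_bound {p q k : ℝ} (hp : 0 < p) (hq : 0 < q) (hk : 0 ≤ k) :
    ∃ C, 1 ≤ C ∧ ∀ u, IsSol p q k u → ∀ x y z d M : ℝ, |z| ≤ 1 → 0 < d → d ≤ 1 → 0 < M →
      (∀ w ∈ Metric.closedBall (x, y, z) d, |u w| ≤ M) →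
      |deriv (fun t => u (t, y, z)) x| ≤ C * (M / d) ∧
      |deriv (fun t => u (x, t, z)) y| ≤ C * (M / d) ∧
      |deriv (fun t => u (x, y, t)) z| ≤ C * (M / d) := by
  have hΘ := one_lt_ellipticity hp hq
  refine ⟨4 + k + 64 * ellipticity p q * (6 * ellipticity p q ^ 2 + 2) ^ 2, ?_, ?_⟩
  · have : 0 ≤ 64 * ellipticity p q * (6 * ellipticity p q ^ 2 + 2) ^ 2 := by positivity
    linarith
  · intro u hu x y z d M hz hd hd1 hM hb
    have hle : (6 * ellipticity p q ^ 2 + 2) * (M / d) ≤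
        (4 + k + 64 * ellipticity p q * (6 * ellipticity p q ^ 2 + 2) ^ 2) * (M / d) := by
      have h1 : 1 ≤ 6 * ellipticity p q ^ 2 + 2 := by nlinarith
      exact mul_le_mul_of_nonneg_right (by nlinarith) (by positivity)
    exact ⟨(hu.abs_deriv_fst_le hp hq hk (by linarith) hd hd1 hM hb).trans hle,
      (hu.abs_deriv_snd_le hp hq hk (by linarith) hd hd1 hM hb).trans hle,
      hu.abs_deriv_thd_le hp hq hk hz hd hd1 hM hb⟩

/-- A function whose partial derivatives are bounded by `B` on a box of radius `r` oscillates by at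
most `3 * B * r` around the centre. -/
lemma abs_sub_le_of_partial_deriv_le {u : ℝ × ℝ × ℝ → ℝ} (hu : ContDiff ℝ 2 u)
    {c : ℝ × ℝ × ℝ} {r B : ℝ} (hr : 0 ≤ r)
    (hB : ∀ w ∈ Metric.closedBall c r, |deriv (fun t => u (t, w.2.1, w.2.2)) w.1| ≤ B ∧
      |deriv (fun t => u (w.1, t, w.2.2)) w.2.1| ≤ B ∧
      |deriv (fun t => u (w.1, w.2.1, t)) w.2.2| ≤ B) :
    ∀ w ∈ Metric.closedBall c r, |u w - u c| ≤ 3 * B * r := by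
  obtain ⟨x, y, z⟩ := c
  rintro ⟨x', y', z'⟩ hw
  obtain ⟨hx, hy, hz⟩ := abs_sub_le_of_mem_closedBall hw
  dsimp only at hx hy hz
  have hr' : |(0 : ℝ)| ≤ r := by simpa using hr
  have hB0 : 0 ≤ B := (abs_nonneg _).trans (hB _ (Metric.mem_closedBall_self hr)).1
  have line : ∀ (f : ℝ → ℝ) (s t : ℝ), ContDiff ℝ 2 f → |t - s| ≤ r →
      (∀ τ, |τ - s| ≤ r → |deriv f τ| ≤ B) → |f t - f s| ≤ B * r := by
    intro f s t hf hst hd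
    have := Convex.norm_image_sub_le_of_norm_deriv_le (f := f) (s := Metric.closedBall s r)
      (x := s) (y := t) (C := B) (fun τ _ => hf.differentiable (by norm_num) τ)
      (fun τ hτ => hd τ hτ) (convex_closedBall _ _) (Metric.mem_closedBall_self hr) hst
    exact this.trans (mul_le_mul_of_nonneg_left hst hB0)
  have h₁ := line (fun t => u (t, y, z)) x x' (by fun_prop) hx fun τ hτ =>
    (hB (τ, y, z) (mem_closedBall_of_abs_sub_le hτ (by simpa) (by simpa))).1
  have h₂ := line (fun t => u (x', t, z)) y y' (by fun_prop) hy fun τ hτ =>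
    (hB (x', τ, z) (mem_closedBall_of_abs_sub_le hx hτ (by simpa))).2.1
  have h₃ := line (fun t => u (x', y', t)) z z' (by fun_prop) hz fun τ hτ =>
    (hB (x', y', τ) (mem_closedBall_of_abs_sub_le hx hy hτ)).2.2
  rw [abs_le] at h₁ h₂ h₃ ⊢
  constructor <;> linarith [h₁.1, h₁.2, h₂.1, h₂.2, h₃.1, h₃.2]

/-! ### The Harnack inequality -/

lemma hasDerivAt_inv_sq_add_pow (m : ℕ) {b : ℝ} (hb : 0 < b) (c t : ℝ) :
    HasDerivAt (fun t => (((t - c) ^ 2 + b)⁻¹) ^ m)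
      (-(2 * m * (t - c) * (((t - c) ^ 2 + b)⁻¹) ^ (m + 1))) t := by
  have hne : (t - c) ^ 2 + b ≠ 0 := by positivity
  have h₀ : HasDerivAt (fun t => (t - c) ^ 2 + b) (2 * (t - c)) t := by
    have := (((hasDerivAt_id t).sub_const c).pow 2).add_const b
    refine this.congr_deriv ?_
    simp
  have h := (h₀.fun_inv hne).fun_pow m
  refine h.congr_deriv ?_
  cases m with
  | zero => simp
  | succ n =>
    rw [Nat.add_sub_cancel]
    push_cast
    rw [div_eq_mul_inv, ← inv_pow]
    ring

lemma iteratedDeriv_two_inv_sq_add_pow (m : ℕ) {b : ℝ} (hb : 0 < b) (c t : ℝ) :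
    iteratedDeriv 2 (fun t => (((t - c) ^ 2 + b)⁻¹) ^ m) t =
      4 * m * (m + 1) * (t - c) ^ 2 * (((t - c) ^ 2 + b)⁻¹) ^ (m + 2)
        - 2 * m * (((t - c) ^ 2 + b)⁻¹) ^ (m + 1) := by
  refine iteratedDeriv_two_eq (hasDerivAt_inv_sq_add_pow m hb c) ?_
  have h := ((((hasDerivAt_id t).sub_const c).const_mul (2 * (m : ℝ))).fun_mul
    (hasDerivAt_inv_sq_add_pow (m + 1) hb c t)).fun_neg
  refine h.congr_deriv ?_
  simp
  ring

/-- The squared Euclidean distance. -/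
def sqDist (c w : ℝ × ℝ × ℝ) : ℝ := (w.1 - c.1) ^ 2 + (w.2.1 - c.2.1) ^ 2 + (w.2.2 - c.2.2) ^ 2

lemma sqDist_nonneg (c w : ℝ × ℝ × ℝ) : 0 ≤ sqDist c w := by unfold sqDist; positivity

lemma contDiff_sqDist (c : ℝ × ℝ × ℝ) : ContDiff ℝ 2 (sqDist c) := by
  unfold sqDist; fun_prop

lemma mem_closedBall_of_sqDist_le {c w : ℝ × ℝ × ℝ} {r : ℝ} (hr : 0 ≤ r)
    (h : sqDist c w ≤ r ^ 2) : w ∈ Metric.closedBall c r := by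
  unfold sqDist at h
  refine mem_closedBall_of_abs_sub_le (abs_le_of_sq_le_sq ?_ hr) (abs_le_of_sq_le_sq ?_ hr)
    (abs_le_of_sq_le_sq ?_ hr) <;>
  nlinarith [sq_nonneg (w.1 - c.1), sq_nonneg (w.2.1 - c.2.1), sq_nonneg (w.2.2 - c.2.2)]

lemma contDiff_inv_sqDist_pow (c : ℝ × ℝ × ℝ) {b : ℝ} (hb : 0 < b) (m : ℕ) :
    ContDiff ℝ 2 (fun w => ((sqDist c w + b)⁻¹) ^ m) :=
  (((contDiff_sqDist c).add contDiff_const).inv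
    fun w => by have := sqDist_nonneg c w; positivity).pow m

lemma solOp_inv_sqDist_pow (p q : ℝ) (c : ℝ × ℝ × ℝ) {b : ℝ} (hb : 0 < b) (m : ℕ)
    (w : ℝ × ℝ × ℝ) :
    solOp p q (fun w => ((sqDist c w + b)⁻¹) ^ m) w =
      4 * m * (m + 1) * (exp (2 * p * w.2.2) * (w.1 - c.1) ^ 2
        + exp (-(2 * q * w.2.2)) * (w.2.1 - c.2.1) ^ 2 + (w.2.2 - c.2.2) ^ 2)
        * ((sqDist c w + b)⁻¹) ^ (m + 2)
      - 2 * m * (exp (2 * p * w.2.2) + exp (-(2 * q * w.2.2)) + 1)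
        * ((sqDist c w + b)⁻¹) ^ (m + 1) := by
  obtain ⟨x, y, z⟩ := w
  obtain ⟨a₁, a₂, a₃⟩ := c
  simp only [solOp, sqDist]
  have e₁ : ∀ t, (t - a₁) ^ 2 + (y - a₂) ^ 2 + (z - a₃) ^ 2 + b
    = (t - a₁) ^ 2 + ((y - a₂) ^ 2 + (z - a₃) ^ 2 + b) := fun t => by ring
  have e₂ : ∀ t, (x - a₁) ^ 2 + (t - a₂) ^ 2 + (z - a₃) ^ 2 + b
    = (t - a₂) ^ 2 + ((x - a₁) ^ 2 + (z - a₃) ^ 2 + b) := fun t => by ring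
  have e₃ : ∀ t, (x - a₁) ^ 2 + (y - a₂) ^ 2 + (t - a₃) ^ 2 + b
    = (t - a₃) ^ 2 + ((x - a₁) ^ 2 + (y - a₂) ^ 2 + b) := fun t => by ring
  have h₁ := iteratedDeriv_two_inv_sq_add_pow m
    (b := (y - a₂) ^ 2 + (z - a₃) ^ 2 + b) (by positivity) a₁ x
  have h₂ := iteratedDeriv_two_inv_sq_add_pow m
    (b := (x - a₁) ^ 2 + (z - a₃) ^ 2 + b) (by positivity) a₂ y
  have h₃ := iteratedDeriv_two_inv_sq_add_pow m
    (b := (x - a₁) ^ 2 + (y - a₂) ^ 2 + b) (by positivity) a₃ z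
  simp only [← e₁] at h₁
  simp only [← e₂] at h₂
  simp only [← e₃] at h₃
  rw [h₁, h₂, h₃]
  ring

/-- Away from the centre, a large negative power of the distance is a strict subsolution. -/
lemma mul_lt_solOp_inv_sqDist_pow {p q k : ℝ} (hp : 0 < p) (hq : 0 < q) (hk : 0 ≤ k)
    {c w : ℝ × ℝ × ℝ} {b : ℝ} (hb : 0 < b) (hb1 : b ≤ 1) {m : ℕ} (hm : 1 ≤ m)
    (hmk : ellipticity p q * (3 * ellipticity p q + 5 * k + 1) ≤ m + 1) (hw : |w.2.2| ≤ 3)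
    (hbw : b ≤ sqDist c w) (hw4 : sqDist c w ≤ 4) :
    k * ((sqDist c w + b)⁻¹) ^ m < solOp p q (fun w => ((sqDist c w + b)⁻¹) ^ m) w := by
  rw [solOp_inv_sqDist_pow p q c hb]
  set Θ := ellipticity p q with hΘ
  have hΘ1 : 1 < Θ := one_lt_ellipticity hp hq
  set s := sqDist c w with hs
  set σ := (s + b)⁻¹ with hσ
  have hsb : 0 < s + b := by linarith
  have hσ0 : 0 < σ := inv_pos.2 hsb
  have hσs : σ * (s + b) = 1 := inv_mul_cancel₀ hsb.ne'
  have hσ5 : 1 ≤ 5 * σ := by nlinarith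
  have hσs2 : 1 ≤ 2 * (s * σ) := by nlinarith
  have hm1 : (1 : ℝ) ≤ m := by exact_mod_cast hm
  have hlow : s ≤ Θ * (exp (2 * p * w.2.2) * (w.1 - c.1) ^ 2
      + exp (-(2 * q * w.2.2)) * (w.2.1 - c.2.1) ^ 2 + (w.2.2 - c.2.2) ^ 2) := by
    have h₁ := one_le_ellipticity_mul_exp_fst hp hq hw
    have h₂ := one_le_ellipticity_mul_exp_snd hp hq hw
    have := mul_le_mul_of_nonneg_right h₁ (sq_nonneg (w.1 - c.1))
    have := mul_le_mul_of_nonneg_right h₂ (sq_nonneg (w.2.1 - c.2.1))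
    have := mul_le_mul_of_nonneg_right hΘ1.le (sq_nonneg (w.2.2 - c.2.2))
    simp only [hs, sqDist]
    linarith
  have hup : exp (2 * p * w.2.2) + exp (-(2 * q * w.2.2)) + 1 ≤ 3 * Θ := by
    linarith [exp_fst_le_ellipticity hp hq hw, exp_snd_le_ellipticity hp hq hw]
  set A := exp (2 * p * w.2.2) * (w.1 - c.1) ^ 2
      + exp (-(2 * q * w.2.2)) * (w.2.1 - c.2.1) ^ 2 + (w.2.2 - c.2.2) ^ 2
  set E := exp (2 * p * w.2.2) + exp (-(2 * q * w.2.2)) + 1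
  have hA0 : 0 ≤ A := by positivity
  have h₁ : 3 * Θ + 5 * k + 1 ≤ (m + 1) * (2 * (A * σ)) := by
    have h₂ : 1 ≤ Θ * (2 * (A * σ)) := by nlinarith
    have h₃ : 0 ≤ 3 * Θ + 5 * k + 1 := by positivity
    have h₄ : 0 ≤ 2 * (A * σ) := by positivity
    calc 3 * Θ + 5 * k + 1 ≤ (3 * Θ + 5 * k + 1) * (Θ * (2 * (A * σ))) :=
          le_mul_of_one_le_right h₃ h₂
      _ = (Θ * (3 * Θ + 5 * k + 1)) * (2 * (A * σ)) := by ring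
      _ ≤ _ := mul_le_mul_of_nonneg_right hmk h₄
  have h₂ : k < 2 * m * σ * ((m + 1) * (2 * (A * σ)) - E) := by
    have h₃ : 5 * k + 1 ≤ (m + 1) * (2 * (A * σ)) - E := by linarith
    have h₄ : 1 ≤ 5 * (m * σ) := by nlinarith
    have h₅ : 0 < m * σ := by positivity
    nlinarith [mul_le_mul_of_nonneg_left h₃ h₅.le]
  calc k * σ ^ m < 2 * m * σ * ((m + 1) * (2 * (A * σ)) - E) * σ ^ m :=
        mul_lt_mul_of_pos_right h₂ (pow_pos hσ0 m)
    _ = _ := by ring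

/-- Propagation of lower bounds from a small box: the loss is polynomial in its radius, with an
exponent depending only on the operator. -/
lemma IsSol.lower_bound {p q k : ℝ} (hp : 0 < p) (hq : 0 < q) (hk : 0 ≤ k) {m : ℕ} (hm : 1 ≤ m)
    (hmk : ellipticity p q * (3 * ellipticity p q + 5 * k + 1) ≤ m + 1)
    {u : ℝ × ℝ × ℝ → ℝ} (hu : IsSol p q k u) (hpos : ∀ w, 0 < u w) {c : ℝ × ℝ × ℝ}
    (hc : |c.2.2| ≤ 1) {r l : ℝ} (hr : 0 < r) (hr1 : r ≤ 1) (hl : 0 < l)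
    (hlu : ∀ w ∈ Metric.closedBall c r, l ≤ u w) {w : ℝ × ℝ × ℝ} (hw : sqDist c w ≤ 3) :
    l * (r ^ 2) ^ m * (1 / 5 * (1 / 4) ^ m) ≤ u w := by
  set b := r ^ 2 with hb
  have hb0 : 0 < b := by positivity
  have hb1 : b ≤ 1 := pow_le_one₀ hr.le hr1
  set g : ℝ × ℝ × ℝ → ℝ := fun w => ((sqDist c w + b)⁻¹) ^ m with hg
  have hgC : ContDiff ℝ 2 g := contDiff_inv_sqDist_pow c hb0 m
  set e := ((4 + b)⁻¹) ^ m with he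
  have he0 : 0 < e := by positivity
  have hβ : 0 < l * b ^ m := by positivity
  have hconst : ∀ w, solOp p q (fun _ => e) w = 0 := fun w => by
    simp [solOp, iteratedDeriv_const]
  have hK : IsCompact {w | sqDist c w ≤ 4} := by
    refine (isCompact_closedBall c 2).of_isClosed_subset
      (isClosed_le (contDiff_sqDist c).continuous continuous_const) fun w hw => ?_
    exact mem_closedBall_of_sqDist_le (by norm_num) (le_trans hw (by norm_num))
  have key := nonpos_of_solOp_pos (p := p) (q := q) hK
    (f := fun w => l * b ^ m * (g w - e) - u w)
    (by have := hgC.continuous; have := hu.contDiff.continuous; fun_prop) ?_ w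
    (le_trans hw (by norm_num))
  · have h₁ : (1 / 4 : ℝ) ^ m ≤ g w := by
      simp only [hg, one_div]
      have := sqDist_nonneg c w
      gcongr
      linarith
    have h₂ : e ≤ 4 / 5 * g w := by
      have hs := sqDist_nonneg c w
      calc e ≤ (4 / 5 * (sqDist c w + b)⁻¹) ^ m := by
            refine pow_le_pow_left₀ (by positivity) ?_ m
            rw [inv_le_iff_one_le_mul₀ (by positivity)]
            field_simp
            linarith
        _ = (4 / 5) ^ m * g w := by rw [mul_pow]
        _ ≤ 4 / 5 * g w := by
            gcongr
            exact pow_le_of_le_one (by norm_num) (by norm_num) (by omega)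
    have h₃ : 1 / 5 * (1 / 4 : ℝ) ^ m ≤ g w - e := by linarith
    have := mul_le_mul_of_nonneg_left h₃ hβ.le
    linarith
  · intro w hw hwpos
    have hs := sqDist_nonneg c w
    have hbw : b < sqDist c w := by
      by_contra! hcon
      have h₁ := hlu w (mem_closedBall_of_sqDist_le hr.le hcon)
      have h₂ : b ^ m * g w ≤ 1 := by
        simp only [hg]
        rw [← mul_pow]
        refine pow_le_one₀ (by positivity) ?_
        rw [mul_inv_le_iff₀ (by positivity)]
        linarith
      nlinarith [mul_le_mul_of_nonneg_left h₂ hl.le, mul_pos hβ he0]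
    have hge : e < g w := by
      by_contra! hcon
      nlinarith [hpos w]
    have hw4 : sqDist c w < 4 := by
      refine lt_of_le_of_ne hw fun h4 => hge.ne' ?_
      simp only [hg, he, h4]
    refine ⟨mem_of_superset ((isOpen_lt (contDiff_sqDist c).continuous
      continuous_const).mem_nhds hw4) fun w (hw : sqDist c w < 4) =>
        show sqDist c w ≤ 4 from hw.le, ?_⟩
    have hz3 : |w.2.2| ≤ 3 := by
      have h₁ := abs_sub_le_of_mem_closedBall
        (mem_closedBall_of_sqDist_le (c := c) (w := w) (r := 2) (by norm_num)
          (hw.trans (by norm_num)))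
      have := abs_sub_abs_le_abs_sub w.2.2 c.2.2
      linarith [h₁.2.2]
    have hsub := mul_lt_solOp_inv_sqDist_pow hp hq hk hb0 hb1 hm hmk hz3 hbw.le hw4.le
    rw [solOp_sub (by fun_prop) hu.contDiff, solOp_const_mul, solOp_sub hgC contDiff_const,
      hconst, hu.eq, sub_zero]
    have h₁ := mul_lt_mul_of_pos_left hsub hβ
    have h₂ : 0 ≤ k * (l * b ^ m * (g w - e) - u w) := mul_nonneg hk hwpos.le
    have h₃ : 0 ≤ k * (l * b ^ m * e) := by positivity
    nlinarith

/-- The Harnack inequality on a box centred at the origin. -/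
lemma exists_harnack {p q k : ℝ} (hp : 0 < p) (hq : 0 < q) (hk : 0 ≤ k) :
    ∃ C, 0 < C ∧ ∀ u, IsSol p q k u → (∀ w, 0 < u w) →
      ∀ w ∈ Metric.closedBall (0, 0, 0) (1 / 2), u w ≤ C * u (0, 0, 0) := by
  obtain ⟨G, hG1, hG⟩ := exists_gradient_bound hp hq hk
  obtain ⟨m, hm⟩ := exists_nat_ge (ellipticity p q * (3 * ellipticity p q + 5 * k + 1))
  have hΘ := one_lt_ellipticity hp hq
  have hm1 : 1 ≤ m := by
    have : (1 : ℝ) ≤ m := le_trans (by nlinarith) hm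
    exact_mod_cast this
  set N : ℝ := 2 ^ (2 * m) with hN
  have hN1 : 1 ≤ N := one_le_pow₀ (by norm_num)
  set ρ : ℝ := 1 / (12 * G * N) with hρ
  have hρ0 : 0 < ρ := by positivity
  have hGN : 1 ≤ G * N := by nlinarith
  have hρ1 : ρ ≤ 1 / 2 := by
    rw [hρ, div_le_div_iff₀ (by positivity) (by norm_num)]
    nlinarith
  set δ : ℝ := 1 / 2 * (ρ ^ 2) ^ m * (1 / 5 * (1 / 4) ^ m) with hδ
  have hδ0 : 0 < δ := by positivity
  refine ⟨N * N / δ, by positivity, fun u hu hpos w hw => ?_⟩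
  have hcont := hu.contDiff.continuous
  obtain ⟨P, hP, hmax⟩ := (isCompact_closedBall (0 : ℝ × ℝ × ℝ) 1).exists_isMaxOn
    ⟨0, Metric.mem_closedBall_self zero_le_one⟩
    (f := fun w => (1 - ‖w‖) ^ (2 * m) * u w) (by fun_prop)
  have hP1 : ‖P‖ < 1 := by
    refine lt_of_le_of_ne (by simpa using hP) fun h => ?_
    have := hmax (Metric.mem_closedBall_self zero_le_one)
    simp only [mem_ofPred_eq, norm_zero, h, sub_zero, sub_self, one_pow, one_mul] at this
    rw [zero_pow (by omega), zero_mul] at this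
    exact absurd this (not_le.2 (hpos _))
  set d := (1 - ‖P‖) / 2 with hd
  have hd0 : 0 < d := by linarith
  have hd1 : d ≤ 1 := by linarith [norm_nonneg P]
  have hPd : 1 - ‖P‖ = 2 * d := by rw [hd]; ring
  have hnorm : ∀ {w}, w ∈ Metric.closedBall P d → ‖w‖ ≤ 1 - d := fun {w} hw => by
    have := norm_le_norm_add_norm_sub' w P
    have := mem_closedBall_iff_norm.1 hw
    linarith
  have hbound : ∀ w ∈ Metric.closedBall P d, u w ≤ N * u P := by
    intro w hw
    have hw1 := hnorm hw
    have h₁ : (1 - ‖w‖) ^ (2 * m) * u w ≤ (1 - ‖P‖) ^ (2 * m) * u P :=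
      hmax (show w ∈ Metric.closedBall 0 1 by simp; linarith)
    have h₂ : d ^ (2 * m) * u w ≤ (1 - ‖w‖) ^ (2 * m) * u w := by
      gcongr
      · exact (hpos w).le
      · linarith
    rw [hPd, mul_pow] at h₁
    have h₃ : d ^ (2 * m) * u w ≤ d ^ (2 * m) * (N * u P) := by
      rw [hN]; linarith
    exact le_of_mul_le_mul_left h₃ (by positivity)
  have hM : 0 < N * u P := mul_pos (by positivity) (hpos P)
  have hgrad : ∀ w ∈ Metric.closedBall P (ρ * d),
      |deriv (fun t => u (t, w.2.1, w.2.2)) w.1| ≤ G * (N * u P / (d / 2)) ∧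
      |deriv (fun t => u (w.1, t, w.2.2)) w.2.1| ≤ G * (N * u P / (d / 2)) ∧
      |deriv (fun t => u (w.1, w.2.1, t)) w.2.2| ≤ G * (N * u P / (d / 2)) := by
    intro w hw
    have hw' := Metric.mem_closedBall.1 hw
    have hsub : Metric.closedBall w (d / 2) ⊆ Metric.closedBall P d :=
      Metric.closedBall_subset_closedBall' (by nlinarith)
    refine hG u hu _ _ _ _ _ ?_ (by positivity) (by linarith) hM fun w' hw' => ?_
    · have h₁ := hnorm (hsub (Metric.mem_closedBall_self (by positivity)))
      have h₂ : |w.2.2| ≤ ‖w‖ := (norm_snd_le w.2).trans (norm_snd_le w)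
      linarith
    · rw [abs_of_pos (hpos w')]
      exact hbound w' (hsub hw')
  have hlow : ∀ w ∈ Metric.closedBall P (ρ * d), 1 / 2 * u P ≤ u w := by
    intro w hw
    have h₁ := abs_sub_le_of_partial_deriv_le hu.contDiff (by positivity) hgrad w hw
    have h₂ : 3 * (G * (N * u P / (d / 2))) * (ρ * d) = 1 / 2 * u P := by
      rw [hρ]; field_simp; ring_nf
    rw [h₂] at h₁
    linarith [(abs_le.1 h₁).1]
  have hPz : |P.2.2| ≤ 1 := ((norm_snd_le P.2).trans (norm_snd_le P)).trans hP1.le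
  have hP0 : sqDist P (0, 0, 0) ≤ 3 := by
    have hx : |P.1| ≤ 1 := (norm_fst_le P).trans hP1.le
    have hy : |P.2.1| ≤ 1 := ((norm_fst_le P.2).trans (norm_snd_le P)).trans hP1.le
    simp only [sqDist, zero_sub, neg_sq]
    linarith [(sq_le_one_iff_abs_le_one _).2 hx, (sq_le_one_iff_abs_le_one _).2 hy,
      (sq_le_one_iff_abs_le_one _).2 hPz]
  have hfin := hu.lower_bound hp hq hk hm1 (by linarith) hpos hPz (r := ρ * d)
    (l := 1 / 2 * u P) (by positivity) (by nlinarith) (by have := hpos P; positivity) hlow hP0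
  have hfin' : δ * (d ^ (2 * m) * u P) ≤ u (0, 0, 0) := by
    refine le_trans (le_of_eq ?_) hfin
    rw [hδ, pow_mul d]
    ring_nf
  have hw1 : ‖w‖ ≤ 1 / 2 := mem_closedBall_zero_iff.1 hw
  have hwmax : (1 - ‖w‖) ^ (2 * m) * u w ≤ (1 - ‖P‖) ^ (2 * m) * u P :=
    hmax (show w ∈ Metric.closedBall 0 1 by simp; linarith)
  have hw2 : (1 / 2) ^ (2 * m) * u w ≤ (1 - ‖w‖) ^ (2 * m) * u w := by
    gcongr
    · exact (hpos w).le
    · linarith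
  rw [hPd, mul_pow] at hwmax
  have hw3 : u w ≤ N * (N * (d ^ (2 * m) * u P)) := by
    have h₁ : N * ((1 / 2) ^ (2 * m) * u w) = u w := by
      rw [hN, ← mul_assoc, ← mul_pow]; norm_num
    rw [← h₁]
    refine mul_le_mul_of_nonneg_left ?_ (by positivity)
    rw [hN]
    linarith
  calc u w ≤ N * (N * (d ^ (2 * m) * u P)) := hw3
    _ = N * N / δ * (δ * (d ^ (2 * m) * u P)) := by field_simp
    _ ≤ N * N / δ * u (0, 0, 0) := by gcongr

/-! ### Global gradient bounds and growth of positive solutions -/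

/-- Positive solutions have bounded logarithmic gradient for the left-invariant frame. -/
lemma exists_log_gradient_bound {p q k : ℝ} (hp : 0 < p) (hq : 0 < q) (hk : 0 ≤ k) :
    ∃ C, 0 < C ∧ ∀ u, IsSol p q k u → (∀ w, 0 < u w) → ∀ x y z : ℝ,
      |deriv (fun t => u (t, y, z)) x| ≤ C * exp (-(p * z)) * u (x, y, z) ∧
      |deriv (fun t => u (x, t, z)) y| ≤ C * exp (q * z) * u (x, y, z) ∧
      |deriv (fun t => u (x, y, t)) z| ≤ C * u (x, y, z) := by
  obtain ⟨G, hG1, hG⟩ := exists_gradient_bound hp hq hk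
  obtain ⟨H, hH0, hH⟩ := exists_harnack hp hq hk
  refine ⟨2 * (G * H), by positivity, fun u hu hpos x y z => ?_⟩
  have hv := hu.translate x y z
  have hu0 := hpos (x, y, z)
  have hharn := hH _ hv fun w => hpos _
  simp only [mul_zero, add_zero] at hharn
  obtain ⟨h₁, h₂, h₃⟩ := hG _ hv 0 0 0 (1 / 2) (H * u (x, y, z)) (by norm_num) (by norm_num)
    (by norm_num) (by positivity) fun w hw => by
      rw [abs_of_pos (hpos _)]
      exact hharn w hw
  have e : G * (H * u (x, y, z) / (1 / 2)) = 2 * (G * H) * u (x, y, z) := by ring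
  rw [e] at h₁ h₂ h₃
  simp only [mul_zero, add_zero] at h₁ h₂ h₃
  rw [deriv_comp_mul_left (exp (p * z)) (fun t => u (x + t, y, z)),
    deriv_comp_const_add (fun t => u (t, y, z)), smul_eq_mul, abs_mul, abs_of_pos (exp_pos _),
    mul_zero, add_zero] at h₁
  rw [deriv_comp_mul_left (exp (-(q * z))) (fun t => u (x, y + t, z)),
    deriv_comp_const_add (fun t => u (x, t, z)), smul_eq_mul, abs_mul, abs_of_pos (exp_pos _),
    mul_zero, add_zero] at h₂
  rw [deriv_comp_const_add (fun t => u (x, y, t)), add_zero] at h₃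
  refine ⟨?_, ?_, h₃⟩
  · rw [exp_neg, mul_right_comm, ← div_eq_mul_inv, le_div_iff₀' (exp_pos _)]
    exact h₁
  · rw [exp_neg, ← div_eq_inv_mul, div_le_iff₀ (exp_pos _)] at h₂
    linarith

/-- Integrated form of the logarithmic gradient bound. -/
lemma exists_log_lipschitz {p q k : ℝ} (hp : 0 < p) (hq : 0 < q) (hk : 0 ≤ k) :
    ∃ C, 0 < C ∧ ∀ u, IsSol p q k u → (∀ w, 0 < u w) →
      (∀ x x' y z, u (x', y, z) ≤ u (x, y, z) * exp (C * exp (-(p * z)) * |x' - x|)) ∧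
      (∀ x y y' z, u (x, y', z) ≤ u (x, y, z) * exp (C * exp (q * z) * |y' - y|)) ∧
      (∀ x y z z₁, u (x, y, z₁) ≤ u (x, y, z) * exp (C * |z₁ - z|)) := by
  obtain ⟨C, hC0, hC⟩ := exists_log_gradient_bound hp hq hk
  refine ⟨C, hC0, fun u hu hpos => ?_⟩
  have hd : Differentiable ℝ u := hu.contDiff.differentiable (by norm_num)
  exact ⟨fun x x' y z => le_mul_exp_of_abs_deriv_le (f := fun t => u (t, y, z))
      (by fun_prop) (fun t => hpos _) (fun t => (hC u hu hpos t y z).1) x x',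
    fun x y y' z => le_mul_exp_of_abs_deriv_le (f := fun t => u (x, t, z))
      (by fun_prop) (fun t => hpos _) (fun t => (hC u hu hpos x t z).2.1) y y',
    fun x y z z₁ => le_mul_exp_of_abs_deriv_le (f := fun t => u (x, y, t))
      (by fun_prop) (fun t => hpos _) (fun t => (hC u hu hpos x y t).2.2) z z₁⟩

/-- Subexponential growth in the horizontal directions, uniformly in the slab `|z| ≤ Z`. -/
def SubexpGrowth (Z : ℝ) (v : ℝ × ℝ × ℝ → ℝ) : Prop :=
  ∀ δ > 0, ∃ K, ∀ w : ℝ × ℝ × ℝ, |w.2.2| ≤ Z → v w ≤ K * exp (δ * (|w.1| + |w.2.1|))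

lemma IsSol.subexpGrowth {p q k : ℝ} (hp : 0 < p) (hq : 0 < q) (hk : 0 ≤ k)
    {u : ℝ × ℝ × ℝ → ℝ} (hu : IsSol p q k u) (hpos : ∀ w, 0 < u w) (Z : ℝ) :
    SubexpGrowth Z u := by
  intro δ hδ
  obtain ⟨C, hC0, hC⟩ := exists_log_lipschitz hp hq hk
  obtain ⟨hx, hy, hz⟩ := hC u hu hpos
  set z₁ := log (C / δ) / p with hz₁
  set z₂ := -(log (C / δ) / q) with hz₂
  have e₁ : C * exp (-(p * z₁)) = δ := by
    rw [hz₁, mul_div_cancel₀ _ hp.ne', exp_neg, exp_log (by positivity)]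
    field_simp
  have e₂ : C * exp (q * z₂) = δ := by
    rw [hz₂, mul_neg, mul_div_cancel₀ _ hq.ne', exp_neg, exp_log (by positivity)]
    field_simp
  refine ⟨u (0, 0, z₂) * exp (C * |z₁ - z₂|) * exp (C * (Z + |z₁|)), ?_⟩
  rintro ⟨x, y, z⟩ hzZ
  simp only at hzZ ⊢
  have s₁ := hy 0 0 y z₂
  have s₂ := hz 0 y z₂ z₁
  have s₃ := hx 0 x y z₁
  have s₄ := hz x y z₁ z
  rw [e₂, sub_zero] at s₁
  rw [e₁, sub_zero] at s₃
  have s₅ : exp (C * |z - z₁|) ≤ exp (C * (Z + |z₁|)) := by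
    gcongr
    exact (abs_sub z z₁).trans (by linarith)
  calc u (x, y, z) ≤ u (x, y, z₁) * exp (C * |z - z₁|) := s₄
    _ ≤ u (0, 0, z₂) * exp (δ * |y|) * exp (C * |z₁ - z₂|) * exp (δ * |x|)
        * exp (C * (Z + |z₁|)) := by
      refine mul_le_mul ?_ s₅ (exp_pos _).le ?_
      · refine s₃.trans (mul_le_mul_of_nonneg_right ?_ (exp_pos _).le)
        exact s₂.trans (mul_le_mul_of_nonneg_right s₁ (exp_pos _).le)
      · have := hpos (0, 0, z₂)
        positivity
    _ = _ := by rw [mul_add δ, exp_add]; ring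

/-! ### A Phragmén–Lindelöf principle in slabs -/

lemma solOp_cosh_add_cosh_mul_cos (p q b β : ℝ) (w : ℝ × ℝ × ℝ) :
    solOp p q (fun w => (cosh (b * w.1) + cosh (b * w.2.1)) * cos (β * w.2.2)) w =
      ((b ^ 2 * exp (2 * p * w.2.2) - β ^ 2) * cosh (b * w.1)
        + (b ^ 2 * exp (-(2 * q * w.2.2)) - β ^ 2) * cosh (b * w.2.1)) * cos (β * w.2.2) := by
  have hlin : ∀ a t : ℝ, HasDerivAt (fun t => a * t) a t := fun a t => by
    simpa using (hasDerivAt_id t).const_mul a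
  have hcosh : ∀ c d t : ℝ, iteratedDeriv 2 (fun t => (cosh (b * t) + c) * d) t
      = b ^ 2 * cosh (b * t) * d := fun c d t => by
    refine iteratedDeriv_two_eq (f' := fun t => b * sinh (b * t) * d) (fun s => ?_) ?_
    · exact (((hlin b s).cosh.add_const c).mul_const d).congr_deriv (by ring)
    · exact (((hlin b t).sinh.const_mul b).mul_const d).congr_deriv (by ring)
  have hcos : ∀ c t : ℝ, iteratedDeriv 2 (fun t => c * cos (β * t)) t
      = -(β ^ 2 * (c * cos (β * t))) := fun c t => by
    refine iteratedDeriv_two_eq (f' := fun t => c * (-sin (β * t) * β)) (fun s => ?_) ?_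
    · exact (hlin β s).cos.const_mul c
    · exact (((hlin β t).sin.fun_neg.mul_const β).const_mul c).congr_deriv (by ring)
  have e₂ : iteratedDeriv 2 (fun t => (cosh (b * w.1) + cosh (b * t)) * cos (β * w.2.2)) w.2.1
      = b ^ 2 * cosh (b * w.2.1) * cos (β * w.2.2) := by
    simp only [add_comm (cosh (b * w.1))]
    exact hcosh _ _ _
  simp only [solOp]
  rw [hcosh, e₂, hcos]
  ring

/-- In the slab `|z| ≤ Z`, a solution of subexponential growth that is nonpositive on the boundary
is nonpositive. -/
lemma IsSol.nonpos_of_subexpGrowth {p q k : ℝ} (hp : 0 < p) (hq : 0 < q) (hk : 0 ≤ k)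
    {v : ℝ × ℝ × ℝ → ℝ} (hv : IsSol p q k v) {Z : ℝ} (hZ : 0 < Z) (hgrow : SubexpGrowth Z v)
    (hbd : ∀ w : ℝ × ℝ × ℝ, |w.2.2| = Z → v w ≤ 0) {w₀ : ℝ × ℝ × ℝ} (hw₀ : |w₀.2.2| ≤ Z) :
    v w₀ ≤ 0 := by
  set β := Z⁻¹ with hβ
  have hβ0 : 0 < β := inv_pos.2 hZ
  set b := β / 2 * exp (-((p + q) * Z)) with hb
  have hb0 : 0 < b := by positivity
  set g : ℝ × ℝ × ℝ → ℝ :=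
    fun w => (cosh (b * w.1) + cosh (b * w.2.1)) * cos (β * w.2.2) with hg
  have hgC : ContDiff ℝ 2 g := by
    have h₁ := Real.contDiff_cosh (n := 2)
    have h₂ := Real.contDiff_cos (n := 2)
    exact ((h₁.comp (by fun_prop)).add (h₁.comp (by fun_prop))).mul (h₂.comp (by fun_prop))
  have hcos : ∀ z, |z| ≤ Z → 1 / 2 ≤ cos (β * z) := fun z hz => by
    have h₁ : |β * z| ≤ 1 := by
      rw [abs_mul, abs_of_pos hβ0, hβ, inv_mul_le_iff₀ hZ, mul_one]
      exact hz
    have h₂ := one_sub_sq_div_two_le_cos (x := β * z)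
    have h₃ : (β * z) ^ 2 ≤ 1 := (sq_le_one_iff_abs_le_one _).2 h₁
    linarith
  have hbexp : ∀ s, s ≤ 2 * ((p + q) * Z) → b ^ 2 * exp s < β ^ 2 := fun s hs => by
    have h₁ : b ^ 2 * exp s = β ^ 2 / 4 * exp (s - 2 * ((p + q) * Z)) := by
      rw [hb, mul_pow, ← exp_nat_mul, mul_assoc, ← exp_add]
      push_cast
      ring_nf
    have h₂ : exp (s - 2 * ((p + q) * Z)) ≤ 1 := exp_le_one_iff.2 (by linarith)
    rw [h₁]
    nlinarith [sq_pos_of_pos hβ0]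
  have hsuper : ∀ w : ℝ × ℝ × ℝ, |w.2.2| ≤ Z → solOp p q g w < 0 := fun w hw => by
    rw [hg, solOp_cosh_add_cosh_mul_cos]
    have hc := hcos _ hw
    have hw' := abs_le.1 hw
    have h₁ := hbexp (2 * p * w.2.2) (by nlinarith)
    have h₂ := hbexp (-(2 * q * w.2.2)) (by nlinarith)
    refine mul_neg_of_neg_of_pos ?_ (by linarith)
    have := mul_neg_of_neg_of_pos (sub_neg.2 h₁) (cosh_pos (b * w.1))
    have := mul_neg_of_neg_of_pos (sub_neg.2 h₂) (cosh_pos (b * w.2.1))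
    linarith
  have hglow : ∀ w : ℝ × ℝ × ℝ, |w.2.2| ≤ Z →
      1 / 4 * (exp (b * |w.1|) + exp (b * |w.2.1|)) ≤ g w := fun w hw => by
    have hexp : ∀ t, exp (b * |t|) / 2 ≤ cosh (b * t) := fun t => by
      rw [← cosh_abs (b * t), abs_mul, abs_of_pos hb0, cosh_eq]
      linarith [exp_pos (-(b * |t|))]
    have h₁ := mul_le_mul (add_le_add (hexp w.1) (hexp w.2.1)) (hcos _ hw) (by norm_num)
      (add_pos (cosh_pos _) (cosh_pos _)).le
    simp only [hg]
    linarith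
  have hgpos : ∀ w : ℝ × ℝ × ℝ, |w.2.2| ≤ Z → 0 < g w := fun w hw =>
    lt_of_lt_of_le (by positivity) (hglow w hw)
  obtain ⟨K, hK⟩ := hgrow (b / 4) (by positivity)
  have main : ∀ τ > 0, v w₀ ≤ τ * g w₀ := by
    intro τ hτ
    have htend : Tendsto (fun R => exp (b / 2 * R)) atTop atTop :=
      tendsto_exp_atTop.comp (tendsto_id.const_mul_atTop (by positivity))
    obtain ⟨R, hR₁, hR₂, hR₃⟩ := ((htend.eventually_ge_atTop (4 * |K| / τ)).and
      ((eventually_ge_atTop |w₀.1|).and (eventually_ge_atTop |w₀.2.1|))).exists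
    have hside : ∀ w : ℝ × ℝ × ℝ, |w.1| ≤ R → |w.2.1| ≤ R → |w.2.2| ≤ Z →
        |w.1| = R ∨ |w.2.1| = R → v w ≤ τ * g w := by
      intro w hx hy hz hside
      have h₁ : exp (b / 4 * (|w.1| + |w.2.1|)) ≤ exp (b / 2 * R) := by
        refine exp_le_exp.2 ?_
        nlinarith
      have h₂ : exp (b * R) ≤ exp (b * |w.1|) + exp (b * |w.2.1|) := by
        rcases hside with h | h <;> rw [h]
        · exact le_add_of_nonneg_right (exp_pos _).le
        · exact le_add_of_nonneg_left (exp_pos _).le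
      have h₃ : exp (b * R) = exp (b / 2 * R) * exp (b / 2 * R) := by
        rw [← exp_add]; ring_nf
      rw [div_le_iff₀ hτ] at hR₁
      calc v w ≤ K * exp (b / 4 * (|w.1| + |w.2.1|)) := hK w hz
        _ ≤ |K| * exp (b / 2 * R) := mul_le_mul (le_abs_self K) h₁ (exp_pos _).le (abs_nonneg K)
        _ ≤ τ * (1 / 4 * exp (b * R)) := by
          rw [h₃]
          nlinarith [exp_pos (b / 2 * R)]
        _ ≤ τ * g w := by
          gcongr
          linarith [hglow w hz]
    have hf := nonpos_of_solOp_pos (p := p) (q := q) (f := fun w => v w - τ * g w)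
      (K := Icc (-R) R ×ˢ Icc (-R) R ×ˢ Icc (-Z) Z)
      (isCompact_Icc.prod (isCompact_Icc.prod isCompact_Icc))
      (by have := hv.contDiff.continuous; have := hgC.continuous; fun_prop) ?_ w₀
      ⟨abs_le.1 hR₂, abs_le.1 hR₃, abs_le.1 hw₀⟩
    · linarith
    · rintro w ⟨hwx, hwy, hwz⟩ hwpos
      have hx := abs_le.2 hwx
      have hy := abs_le.2 hwy
      have hz := abs_le.2 hwz
      have hgw := mul_pos hτ (hgpos w hz)
      have hx' : |w.1| < R := lt_of_le_of_ne hx fun h => by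
        linarith [hside w hx hy hz (Or.inl h)]
      have hy' : |w.2.1| < R := lt_of_le_of_ne hy fun h => by
        linarith [hside w hx hy hz (Or.inr h)]
      have hz' : |w.2.2| < Z := lt_of_le_of_ne hz fun h => by
        linarith [hbd w h]
      rw [abs_lt] at hx' hy' hz'
      refine ⟨prod_mem_nhds (Icc_mem_nhds hx'.1 hx'.2)
        (prod_mem_nhds (Icc_mem_nhds hy'.1 hy'.2) (Icc_mem_nhds hz'.1 hz'.2)), ?_⟩
      rw [solOp_sub hv.contDiff (by fun_prop), solOp_const_mul, hv.eq]
      have h₁ : 0 ≤ k * v w := mul_nonneg hk (by linarith)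
      have h₂ := mul_neg_of_pos_of_neg hτ (hsuper w hz)
      linarith
  have hg0 := hgpos w₀ hw₀
  refine le_of_forall_pos_le_add fun ε hε => ?_
  have := main (ε / g w₀) (by positivity)
  rw [div_mul_cancel₀ _ hg0.ne'] at this
  linarith

/-! ### Additive separation of the horizontal variables -/

lemma SubexpGrowth.mono {Z : ℝ} {v v' : ℝ × ℝ × ℝ → ℝ} (hv : SubexpGrowth Z v)
    (h : ∀ w, v' w ≤ v w) : SubexpGrowth Z v' := fun δ hδ => by
  obtain ⟨K, hK⟩ := hv δ hδ
  exact ⟨K, fun w hw => (h w).trans (hK w hw)⟩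

lemma abs_sub_le_of_le_mul {a a' e : ℝ} (h : a' ≤ a * e) (h' : a ≤ a' * e) (he : 1 ≤ e) :
    |a' - a| ≤ (e - 1) * a := by
  rw [abs_le]
  constructor
  · rcases le_total a a' with h₁ | h₁ <;> nlinarith
  · linarith

/-- A positive solution is the sum of a function of `(x, z)` and a function of `(y, z)`. -/
lemma IsSol.add_eq_add {p q k : ℝ} (hp : 0 < p) (hq : 0 < q) (hk : 0 ≤ k)
    {u : ℝ × ℝ × ℝ → ℝ} (hu : IsSol p q k u) (hpos : ∀ w, 0 < u w) (s t x y z : ℝ) :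
    u (x + s, y + t, z) + u (x, y, z) = u (x + s, y, z) + u (x, y + t, z) := by
  obtain ⟨C, hC0, hC⟩ := exists_log_lipschitz hp hq hk
  obtain ⟨hx, hy, -⟩ := hC u hu hpos
  have hst := hu.translate_horizontal s t
  have hs : IsSol p q k (fun w => u (w.1 + s, w.2.1, w.2.2)) := by
    simpa using hu.translate_horizontal s 0
  have ht : IsSol p q k (fun w => u (w.1, w.2.1 + t, w.2.2)) := by
    simpa using hu.translate_horizontal 0 t
  set D : ℝ × ℝ × ℝ → ℝ := fun w =>
    u (w.1 + s, w.2.1 + t, w.2.2) + u w - (u (w.1 + s, w.2.1, w.2.2) + u (w.1, w.2.1 + t, w.2.2))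
    with hD
  have hDsol : IsSol p q k D := (hst.add hu).sub (hs.add ht)
  set H : ℝ × ℝ × ℝ → ℝ := fun w =>
    u w + (u (w.1 + s, w.2.1, w.2.2) + u (w.1, w.2.1 + t, w.2.2)) with hH
  have hHsol : IsSol p q k H := hu.add (hs.add ht)
  have hHpos : ∀ w, 0 < H w := fun w => add_pos (hpos _) (add_pos (hpos _) (hpos _))
  have hgrow : ∀ Z, SubexpGrowth Z (fun w => u (w.1 + s, w.2.1 + t, w.2.2) + H w) := fun Z =>
    (hst.add hHsol).subexpGrowth hp hq hk (fun w => add_pos (hpos _) (hHpos w)) Z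
  have hsmall : ∀ r c ε : ℝ, 0 < r → 0 < ε →
      ∀ᶠ Z in atTop, exp (C * exp (-(r * Z)) * c) - 1 ≤ ε := by
    intro r c ε hr hε
    have h₁ : Tendsto (fun Z => exp (-(r * Z))) atTop (𝓝 0) :=
      tendsto_exp_neg_atTop_nhds_zero.comp (tendsto_id.const_mul_atTop hr)
    have h₂ : Tendsto (fun Z => exp (C * exp (-(r * Z)) * c) - 1) atTop (𝓝 0) := by
      have := (((h₁.const_mul C).mul_const c).rexp).sub_const 1
      simpa using this
    exact h₂.eventually_le_const hε
  have main : ∀ ε > 0, |D (x, y, z)| ≤ ε * H (x, y, z) := by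
    intro ε hε
    obtain ⟨Z, hZ₁, hZ₂, hZ₃, hZ₄⟩ := ((hsmall p |s| ε hp hε).and ((hsmall q |t| ε hq hε).and
      ((eventually_ge_atTop |z|).and (eventually_gt_atTop 0)))).exists
    have hbd : ∀ w : ℝ × ℝ × ℝ, |w.2.2| = Z → |D w| ≤ ε * H w := by
      rintro ⟨x, y, z⟩ hw
      simp only [hD, hH] at hw ⊢
      have p₁ := hpos (x, y, z)
      have p₂ := hpos (x + s, y, z)
      have p₃ := hpos (x, y + t, z)
      rcases eq_or_eq_neg_of_abs_eq hw with rfl | rfl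
      · have hdiff : ∀ y, |u (x + s, y, z) - u (x, y, z)| ≤ ε * u (x, y, z) := fun y => by
          have h₁ := hx x (x + s) y z
          have h₂ := hx (x + s) x y z
          rw [abs_sub_comm] at h₂
          rw [add_sub_cancel_left] at h₁ h₂
          refine (abs_sub_le_of_le_mul h₁ h₂ (one_le_exp (by positivity))).trans ?_
          exact mul_le_mul_of_nonneg_right hZ₁ (hpos _).le
        have h₁ := abs_le.1 (hdiff y)
        have h₂ := abs_le.1 (hdiff (y + t))
        have h₃ := mul_pos hε p₂
        rw [abs_le]
        constructor <;> linarith [h₁.1, h₁.2, h₂.1, h₂.2]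
      · have hdiff : ∀ x, |u (x, y + t, -Z) - u (x, y, -Z)| ≤ ε * u (x, y, -Z) := fun x => by
          have h₁ := hy x y (y + t) (-Z)
          have h₂ := hy x (y + t) y (-Z)
          rw [abs_sub_comm] at h₂
          rw [add_sub_cancel_left, mul_neg] at h₁ h₂
          refine (abs_sub_le_of_le_mul h₁ h₂ (one_le_exp (by positivity))).trans ?_
          exact mul_le_mul_of_nonneg_right hZ₂ (hpos _).le
        have h₁ := abs_le.1 (hdiff x)
        have h₂ := abs_le.1 (hdiff (x + s))
        have h₃ := mul_pos hε p₃
        rw [abs_le]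
        constructor <;> linarith [h₁.1, h₁.2, h₂.1, h₂.2]
    have h₁ := (hDsol.sub (hHsol.const_mul ε)).nonpos_of_subexpGrowth hp hq hk hZ₄
      ((hgrow Z).mono fun w => by
        have := mul_pos hε (hHpos w)
        simp only [hD, hH] at this ⊢
        linarith [hpos (w.1 + s, w.2.1, w.2.2), hpos (w.1, w.2.1 + t, w.2.2)])
      (fun w hw => by linarith [(abs_le.1 (hbd w hw)).2]) (w₀ := (x, y, z)) hZ₃
    have h₂ := ((hDsol.const_mul (-1)).sub (hHsol.const_mul ε)).nonpos_of_subexpGrowth hp hq hk hZ₄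
      ((hgrow Z).mono fun w => by
        have := mul_pos hε (hHpos w)
        simp only [hD, hH] at this ⊢
        linarith [hpos (w.1 + s, w.2.1 + t, w.2.2), hpos w])
      (fun w hw => by linarith [(abs_le.1 (hbd w hw)).1]) (w₀ := (x, y, z)) hZ₃
    rw [abs_le]
    constructor <;> linarith
  have hD0 : |D (x, y, z)| ≤ 0 := by
    refine le_of_forall_pos_le_add fun ε hε => ?_
    have hH0 := hHpos (x, y, z)
    have := main (ε / H (x, y, z)) (by positivity)
    rwa [div_mul_cancel₀ _ hH0.ne', ← zero_add ε] at this
  have := abs_nonpos_iff.1 hD0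
  simp only [hD] at this
  linarith

/-! ### Functions of the height -/

/-- The fundamental solutions `cosh (√k z)` and `sinh (√k z) / √k` of the equation `f_zz = k * f`. -/
lemma exists_fundamental_solutions {k : ℝ} (hk : 0 ≤ k) :
    ∃ c s : ℝ → ℝ, (∀ z, HasDerivAt c (k * s z) z) ∧ (∀ z, HasDerivAt s (c z) z) ∧
      (∀ z, c z ^ 2 - k * s z ^ 2 = 1) ∧ (∀ z, c (-z) = c z) ∧ (∀ z, s (-z) = -s z) ∧
      (∀ z, 0 < c z) ∧ (∀ z, 0 < z → 0 < s z) ∧ c 0 = 1 := by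
  rcases hk.eq_or_lt with rfl | hk
  · refine ⟨fun _ => 1, fun z => z, fun z => ?_, fun z => hasDerivAt_id z, ?_, ?_, ?_, ?_, ?_, ?_⟩
    · simpa using hasDerivAt_const z (1 : ℝ)
    all_goals simp
  · set κ := √k with hκ
    have hκ0 : 0 < κ := sqrt_pos.2 hk
    have hκ2 : κ ^ 2 = k := sq_sqrt hk.le
    have hlin : ∀ z : ℝ, HasDerivAt (fun t => κ * t) κ z := fun z => by
      simpa using (hasDerivAt_id z).const_mul κ
    refine ⟨fun z => cosh (κ * z), fun z => sinh (κ * z) / κ, fun z => ?_, fun z => ?_,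
      fun z => ?_, fun z => ?_, fun z => ?_, fun z => cosh_pos _, fun z hz => ?_, by simp⟩
    · refine (hlin z).cosh.congr_deriv ?_
      rw [← hκ2]; field_simp
    · refine ((hlin z).sinh.div_const κ).congr_deriv ?_
      field_simp
    · rw [div_pow, hκ2, mul_div_cancel₀ _ hk.ne', cosh_sq]
      ring
    · simp
    · simp [neg_div]
    · exact div_pos (sinh_pos_iff.2 (by positivity)) hκ0

lemma contDiff_two_of_hasDerivAt {f f' f'' : ℝ → ℝ} (h₁ : ∀ z, HasDerivAt f (f' z) z)
    (h₂ : ∀ z, HasDerivAt f' (f'' z) z) (hc : Continuous f'') : ContDiff ℝ 2 f := by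
  have hd : deriv f = f' := funext fun z => (h₁ z).deriv
  have hd' : deriv f' = f'' := funext fun z => (h₂ z).deriv
  have : ContDiff ℝ (1 + 1) f := by
    rw [contDiff_succ_iff_deriv]
    refine ⟨fun z => (h₁ z).differentiableAt, by simp, ?_⟩
    rw [hd, contDiff_one_iff_deriv, hd']
    exact ⟨fun z => (h₂ z).differentiableAt, hc⟩
  simpa [one_add_one_eq_two] using this

/-- Variation of constants. -/
lemma exists_forced_solution {k : ℝ} (hk : 0 ≤ k) {g : ℝ → ℝ} (hg : Continuous g) :
    ∃ f : ℝ → ℝ, ContDiff ℝ 2 f ∧ ∀ z, iteratedDeriv 2 f z = k * f z + g z := by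
  obtain ⟨c, s, hc, hs, hcs, -, -, -, -, -⟩ := exists_fundamental_solutions hk
  have hcc : Continuous c := continuous_iff_continuousAt.2 fun z => (hc z).continuousAt
  have hsc : Continuous s := continuous_iff_continuousAt.2 fun z => (hs z).continuousAt
  have hintegral : ∀ f : ℝ → ℝ, Continuous f → ∀ z,
      HasDerivAt (fun z => ∫ t in (0 : ℝ)..z, f t) (f z) z :=
    fun f hf z => intervalIntegral.integral_hasDerivAt_right (hf.intervalIntegrable _ _)
      (hf.stronglyMeasurableAtFilter _ _) hf.continuousAt
  set P : ℝ → ℝ := fun z => ∫ t in (0 : ℝ)..z, c t * g t with hP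
  set Q : ℝ → ℝ := fun z => ∫ t in (0 : ℝ)..z, s t * g t with hQ
  have hP' : ∀ z, HasDerivAt P (c z * g z) z := hintegral _ (hcc.mul hg)
  have hQ' : ∀ z, HasDerivAt Q (s z * g z) z := hintegral _ (hsc.mul hg)
  have h₁ : ∀ z, HasDerivAt (fun z => s z * P z - c z * Q z) (c z * P z - k * s z * Q z) z :=
    fun z => (((hs z).fun_mul (hP' z)).fun_sub ((hc z).fun_mul (hQ' z))).congr_deriv (by ring)
  have h₂ : ∀ z, HasDerivAt (fun z => c z * P z - k * s z * Q z)
      (k * (s z * P z - c z * Q z) + g z) z := fun z =>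
    (((hc z).fun_mul (hP' z)).fun_sub (((hs z).const_mul k).fun_mul (hQ' z))).congr_deriv (by
      linear_combination g z * hcs z)
  have hPc : Continuous P := continuous_iff_continuousAt.2 fun z => (hP' z).continuousAt
  have hQc : Continuous Q := continuous_iff_continuousAt.2 fun z => (hQ' z).continuousAt
  exact ⟨_, contDiff_two_of_hasDerivAt h₁ h₂ (by fun_prop),
    fun z => iteratedDeriv_two_eq h₁ (h₂ z)⟩

lemma isSol_of_height {p q k : ℝ} {f f' : ℝ → ℝ} (h₁ : ∀ z, HasDerivAt f (f' z) z)
    (h₂ : ∀ z, HasDerivAt f' (k * f z) z) : IsSol p q k (fun w => f w.2.2) := by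
  have hf : Continuous f := continuous_iff_continuousAt.2 fun z => (h₁ z).continuousAt
  refine ⟨(contDiff_two_of_hasDerivAt h₁ h₂ (by fun_prop)).comp (by fun_prop), fun w => ?_⟩
  simp [solOp, iteratedDeriv_const, iteratedDeriv_two_eq h₁ (h₂ w.2.2)]

lemma continuous_iteratedDeriv_two_snd {u : ℝ × ℝ × ℝ → ℝ} (hu : ContDiff ℝ 2 u) :
    Continuous (fun z => iteratedDeriv 2 (fun t => u (0, t, z)) 0) := by
  have hline : ∀ z t : ℝ, HasDerivAt (fun t => ((0, t, z) : ℝ × ℝ × ℝ)) (0, 1, 0) t := fun z t =>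
    (hasDerivAt_const t (0 : ℝ)).prodMk ((hasDerivAt_id t).prodMk (hasDerivAt_const t z))
  set F : ℝ × ℝ × ℝ → ℝ := fun w => fderiv ℝ u w (0, 1, 0) with hF
  have hFC : ContDiff ℝ 1 F :=
    (hu.fderiv_right (m := 1) (by norm_num)).clm_apply contDiff_const
  have h : ∀ z, iteratedDeriv 2 (fun t => u (0, t, z)) 0 = fderiv ℝ F (0, 0, z) (0, 1, 0) := by
    intro z
    refine iteratedDeriv_two_eq (f' := fun t => F (0, t, z)) (fun t => ?_) ?_
    · exact ((hu.differentiable (by norm_num)) _).hasFDerivAt.comp_hasDerivAt t (hline z t)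
    · exact ((hFC.differentiable (by norm_num)) _).hasFDerivAt.comp_hasDerivAt (0 : ℝ) (hline z 0)
  simp only [h]
  have := hFC.continuous_fderiv (by norm_num)
  exact (this.comp (by fun_prop : Continuous fun z : ℝ => ((0, 0, z) : ℝ × ℝ × ℝ))).clm_apply
    continuous_const

/-- A positive solution is the sum of a solution depending on `(x, z)` only and a solution
depending on `(y, z)` only. -/
lemma IsSol.exists_add {p q k : ℝ} (hp : 0 < p) (hq : 0 < q) (hk : 0 ≤ k)
    {u : ℝ × ℝ × ℝ → ℝ} (hu : IsSol p q k u) (hpos : ∀ w, 0 < u w) :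
    ∃ A B : ℝ × ℝ → ℝ, IsSol p q k (fun w => A (w.1, w.2.2)) ∧
      IsSol p q k (fun w => B (w.2.1, w.2.2)) ∧ ∀ x y z, u (x, y, z) = A (x, z) + B (y, z) := by
  have hsep : ∀ x y z, u (x, y, z) + u (0, 0, z) = u (x, 0, z) + u (0, y, z) := fun x y z => by
    simpa using hu.add_eq_add hp hq hk hpos x y 0 0 z
  have hC := hu.contDiff
  obtain ⟨f, hf, hf2⟩ := exists_forced_solution hk
    (g := fun z => -(exp (-(2 * q * z)) * iteratedDeriv 2 (fun t => u (0, t, z)) 0))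
    (by have := continuous_iteratedDeriv_two_snd hC; fun_prop)
  have hA : IsSol p q k (fun w => u (w.1, 0, w.2.2) - f w.2.2) := by
    refine ⟨by fun_prop, fun w => ?_⟩
    have hyy : iteratedDeriv 2 (fun t => u (w.1, t, w.2.2)) 0
        = iteratedDeriv 2 (fun t => u (0, t, w.2.2)) 0 := by
      have : (fun t => u (w.1, t, w.2.2))
          = fun t => u (0, t, w.2.2) + (u (w.1, 0, w.2.2) - u (0, 0, w.2.2)) :=
        funext fun t => by linarith [hsep w.1 t w.2.2]
      rw [this, iteratedDeriv_fun_add (by push_cast; fun_prop) (by push_cast; fun_prop)]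
      simp [iteratedDeriv_const]
    have heq := hu.eq (w.1, 0, w.2.2)
    simp only [solOp, hyy] at heq
    simp only [solOp]
    rw [iteratedDeriv_fun_sub (by push_cast; fun_prop) (by push_cast; fun_prop),
      iteratedDeriv_fun_sub (by push_cast; fun_prop) (by push_cast; fun_prop),
      iteratedDeriv_fun_sub (by push_cast; fun_prop) (by push_cast; fun_prop), hf2]
    simp only [iteratedDeriv_const, OfNat.ofNat_ne_zero, if_false]
    linarith
  refine ⟨fun v => u (v.1, 0, v.2) - f v.2, fun v => u (0, v.1, v.2) - u (0, 0, v.2) + f v.2, hA,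
    ?_, fun x y z => by linarith [hsep x y z]⟩
  have : (fun w : ℝ × ℝ × ℝ => u (0, w.2.1, w.2.2) - u (0, 0, w.2.2) + f w.2.2)
      = fun w => u w - (u (w.1, 0, w.2.2) - f w.2.2) :=
    funext fun w => by linarith [hsep w.1 w.2.1 w.2.2]
  simp only [this]
  exact hu.sub hA

/-! ### Positivity of the summands -/

lemma SubexpGrowth.of_le_continuous {Z : ℝ} {v : ℝ × ℝ × ℝ → ℝ} {f : ℝ → ℝ} (hf : Continuous f)
    (h : ∀ w, v w ≤ f w.2.2) : SubexpGrowth Z v := by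
  intro δ hδ
  obtain ⟨M, hM⟩ := (isCompact_Icc (a := -Z) (b := Z)).exists_bound_of_continuousOn hf.continuousOn
  refine ⟨|M|, fun w hw => ?_⟩
  have h₁ := hM _ (abs_le.1 hw)
  calc v w ≤ f w.2.2 := h w
    _ ≤ |M| := ((le_abs_self _).trans h₁).trans (le_abs_self M)
    _ ≤ |M| * exp (δ * (|w.1| + |w.2.1|)) :=
      le_mul_of_one_le_right (abs_nonneg M) (one_le_exp (by positivity))

/-- A positive solution is the sum of a nonnegative solution depending on `(x, z)` only and a
nonnegative solution depending on `(y, z)` only. -/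
lemma IsSol.exists_nonneg_add {p q k : ℝ} (hp : 0 < p) (hq : 0 < q) (hk : 0 ≤ k)
    {u : ℝ × ℝ × ℝ → ℝ} (hu : IsSol p q k u) (hpos : ∀ w, 0 < u w) :
    ∃ A B : ℝ × ℝ → ℝ, IsSol p q k (fun w => A (w.1, w.2.2)) ∧
      IsSol p q k (fun w => B (w.2.1, w.2.2)) ∧ (∀ v, 0 ≤ A v) ∧ (∀ v, 0 ≤ B v) ∧
      ∀ x y z, u (x, y, z) = A (x, z) + B (y, z) := by
  obtain ⟨A, B, hA, hB, hAB⟩ := hu.exists_add hp hq hk hpos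
  have hABpos : ∀ x y z, 0 < A (x, z) + B (y, z) := fun x y z => hAB x y z ▸ hpos _
  obtain ⟨c, s, hc, hs, -, hceven, hsodd, hcpos, hspos, hc0⟩ := exists_fundamental_solutions hk
  have hs0 : s 0 = 0 := by have := hsodd 0; rw [neg_zero] at this; linarith
  have hψ : ∀ α β : ℝ, IsSol p q k (fun w => α * c w.2.2 + β * s w.2.2) := fun α β =>
    isSol_of_height (f := fun z => α * c z + β * s z) (f' := fun z => α * (k * s z) + β * c z)
      (fun z => ((hc z).const_mul α).fun_add ((hs z).const_mul β))
      (fun z => ((((hs z).const_mul k).const_mul α).fun_add ((hc z).const_mul β)).congr_deriv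
        (by ring))
  have hcc : Continuous c := continuous_iff_continuousAt.2 fun z => (hc z).continuousAt
  have hsc : Continuous s := continuous_iff_continuousAt.2 fun z => (hs z).continuousAt
  have hA0 : Continuous fun z => A (0, z) :=
    hA.contDiff.continuous.comp (by fun_prop : Continuous fun z : ℝ => ((0, 0, z) : ℝ × ℝ × ℝ))
  have hB0 : Continuous fun z => B (0, z) :=
    hB.contDiff.continuous.comp (by fun_prop : Continuous fun z : ℝ => ((0, 0, z) : ℝ × ℝ × ℝ))
  set T : ℕ → Set (ℝ × ℝ) := fun n => {v | ∀ x z : ℝ, |z| ≤ n + 1 →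
    v.1 * c z + v.2 * s z ≤ A (x, z) ∧ -B (x, z) ≤ v.1 * c z + v.2 * s z} with hT
  have hclosed : ∀ n, IsClosed (T n) := fun n => by
    simp only [hT, ofPred_forall]
    refine isClosed_iInter fun x => isClosed_iInter fun z => isClosed_iInter fun _ => ?_
    have h₁ : IsClosed {v : ℝ × ℝ | v.1 * c z + v.2 * s z ≤ A (x, z)} :=
      isClosed_le (by fun_prop) continuous_const
    have h₂ : IsClosed {v : ℝ × ℝ | -B (x, z) ≤ v.1 * c z + v.2 * s z} :=
      isClosed_le continuous_const (by fun_prop)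
    exact h₁.inter h₂
  have hanti : ∀ n, T (n + 1) ⊆ T n := fun n v hv x z hz => by
    refine hv x z (hz.trans ?_)
    push_cast
    linarith
  have hnonempty : ∀ n, (T n).Nonempty := by
    intro n
    set N : ℝ := n + 1 with hN
    have hN0 : 0 < N := by positivity
    have hsep : ∀ z, ∃ g, (∀ x, g ≤ A (x, z)) ∧ ∀ y, -B (y, z) ≤ g := fun z => by
      have hbdd : BddBelow (range fun x => A (x, z)) := by
        refine ⟨-B (0, z), ?_⟩
        rintro _ ⟨x, rfl⟩
        simp only
        linarith [hABpos x 0 z]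
      exact ⟨⨅ x, A (x, z), fun x => ciInf_le hbdd x,
        fun y => le_ciInf fun x => by linarith [hABpos x y z]⟩
    obtain ⟨g₁, hg₁, hg₁'⟩ := hsep N
    obtain ⟨g₂, hg₂, hg₂'⟩ := hsep (-N)
    set α := (g₁ + g₂) / (2 * c N) with hα
    set β := (g₁ - g₂) / (2 * s N) with hβ
    have hcN := hcpos N
    have hsN := hspos N hN0
    have e₁ : α * c N + β * s N = g₁ := by
      rw [hα, hβ]; field_simp; ring
    have e₂ : α * c (-N) + β * s (-N) = g₂ := by
      rw [hceven, hsodd, hα, hβ]; field_simp; ring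
    refine ⟨(α, β), fun x z hz => ⟨?_, ?_⟩⟩
    · have h := ((hψ α β).sub hA).nonpos_of_subexpGrowth hp hq hk hN0
        (SubexpGrowth.of_le_continuous (f := fun z => α * c z + β * s z + B (0, z))
          (((hcc.const_mul α).add (hsc.const_mul β)).add hB0) fun w => by
            linarith [hABpos w.1 0 w.2.2])
        (fun w hw => by
          rcases eq_or_eq_neg_of_abs_eq hw with h | h <;> rw [h]
          · linarith [hg₁ w.1]
          · linarith [hg₂ w.1]) (w₀ := (x, 0, z)) hz
      simp only at h ⊢
      linarith
    · have h := (((hψ α β).const_mul (-1)).sub hB).nonpos_of_subexpGrowth hp hq hk hN0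
        (SubexpGrowth.of_le_continuous (f := fun z => A (0, z) - (α * c z + β * s z))
          (hA0.sub ((hcc.const_mul α).add (hsc.const_mul β))) fun w => by
            linarith [hABpos 0 w.2.1 w.2.2])
        (fun w hw => by
          rcases eq_or_eq_neg_of_abs_eq hw with h | h <;> rw [h]
          · linarith [hg₁' w.2.1]
          · linarith [hg₂' w.2.1]) (w₀ := (0, x, z)) hz
      simp only at h ⊢
      linarith
  have hcompact : IsCompact (T 0) := by
    set m₀ := |A (0, 0)| + |B (0, 0)| with hm₀
    set m₁ := (|A (0, 1)| + |B (0, 1)| + m₀ * c 1) / s 1 with hm₁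
    have hs1 := hspos 1 one_pos
    have hc1 := hcpos 1
    refine ((isCompact_Icc (a := -m₀) (b := m₀)).prod
      (isCompact_Icc (a := -m₁) (b := m₁))).of_isClosed_subset (hclosed 0) fun v hv => ?_
    have h₀ := hv 0 0 (by simp)
    have h₁ := hv 0 1 (by simp)
    rw [hc0, hs0] at h₀
    have hv1 : |v.1| ≤ m₀ := by
      rw [abs_le]
      constructor <;> linarith [le_abs_self (A (0, 0)), le_abs_self (B (0, 0)),
        abs_nonneg (A (0, 0)), abs_nonneg (B (0, 0)), h₀.1, h₀.2]
    have hvc : |v.1 * c 1| ≤ m₀ * c 1 := by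
      rw [abs_mul, abs_of_pos hc1]
      gcongr
    have hv2 : |v.2| ≤ m₁ := by
      rw [hm₁, le_div_iff₀ hs1, ← abs_of_pos hs1, ← abs_mul, abs_le]
      have := abs_le.1 hvc
      constructor <;> linarith [le_abs_self (A (0, 1)), le_abs_self (B (0, 1)),
        abs_nonneg (A (0, 1)), abs_nonneg (B (0, 1)), h₁.1, h₁.2, this.1, this.2]
    exact ⟨abs_le.1 hv1, abs_le.1 hv2⟩
  obtain ⟨⟨α, β⟩, hαβ⟩ := IsCompact.nonempty_iInter_of_sequence_nonempty_isCompact_isClosed T hanti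
    hnonempty hcompact hclosed
  rw [mem_iInter] at hαβ
  have hall : ∀ x z : ℝ, α * c z + β * s z ≤ A (x, z) ∧ -B (x, z) ≤ α * c z + β * s z :=
    fun x z => by
      obtain ⟨n, hn⟩ := exists_nat_ge |z|
      exact hαβ n x z (by linarith)
  refine ⟨fun v => A v - (α * c v.2 + β * s v.2), fun v => B v + (α * c v.2 + β * s v.2),
    hA.sub (hψ α β), hB.add (hψ α β), fun v => ?_, fun v => ?_, fun x y z => ?_⟩
  · linarith [(hall v.1 v.2).1]
  · linarith [(hall v.1 v.2).2]
  · rw [hAB]; ring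

/-! ### Removal of the drift -/

lemma hasDerivAt_exp_mul_mul {f : ℝ → ℝ} {f' c t : ℝ} (hf : HasDerivAt f f' t) :
    HasDerivAt (fun t => exp (c * t) * f t) (exp (c * t) * (f' + c * f t)) t := by
  have h : HasDerivAt (fun t => c * t) c t := by simpa using (hasDerivAt_id t).const_mul c
  exact (h.exp.fun_mul hf).congr_deriv (by ring)

lemma iteratedDeriv_two_exp_mul_mul {f : ℝ → ℝ} (hf : ContDiff ℝ 2 f) (c t : ℝ) :
    iteratedDeriv 2 (fun t => exp (c * t) * f t) t =
      exp (c * t) * (iteratedDeriv 2 f t + 2 * c * deriv f t + c ^ 2 * f t) := by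
  have h₁ : ∀ t, HasDerivAt f (deriv f t) t := fun t =>
    ((hf.differentiable (by norm_num)) t).hasDerivAt
  have h₂ : HasDerivAt (deriv f) (iteratedDeriv 2 f t) t := by
    rw [iteratedDeriv_succ, iteratedDeriv_one]
    exact (hf.differentiable_deriv_two t).hasDerivAt
  refine iteratedDeriv_two_eq (fun s => hasDerivAt_exp_mul_mul (h₁ s)) ?_
  exact (hasDerivAt_exp_mul_mul (h₂.fun_add ((h₁ t).const_mul c))).congr_deriv (by ring)

/-- Conjugation by `e^{az}` removes the drift. -/
lemma isSol_exp_mul_of_solLap_eq {p q a lam : ℝ} {h : ℝ × ℝ × ℝ → ℝ} (hC : ContDiff ℝ 2 h)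
    (heig : ∀ w, solLap p q a h w = lam * h w) :
    IsSol p q (2 * lam + a ^ 2) (fun w => exp (a * w.2.2) * h w) := by
  refine ⟨by fun_prop, fun w => ?_⟩
  have heq := heig w
  simp only [solLap] at heq
  simp only [solOp, iteratedDeriv_const_mul_field]
  rw [iteratedDeriv_two_exp_mul_mul (f := fun t => h (w.1, w.2.1, t)) (by fun_prop)]
  linear_combination 2 * exp (a * w.2.2) * heq

lemma IsSol.contDiff_prod {p q k : ℝ} {A : ℝ × ℝ → ℝ}
    (hA : IsSol p q k (fun w => A (w.1, w.2.2))) : ContDiff ℝ 2 A :=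
  hA.contDiff.comp (by fun_prop : ContDiff ℝ 2 fun v : ℝ × ℝ => ((v.1, 0, v.2) : ℝ × ℝ × ℝ))

/-- Conjugation by `e^{-az}` restores the drift. -/
lemma IsSol.hypLap_exp_mul {p q a lam : ℝ} {A : ℝ × ℝ → ℝ}
    (hA : IsSol p q (2 * lam + a ^ 2) (fun w => A (w.1, w.2.2))) (v : ℝ × ℝ) :
    hypLap p a (fun v => exp (-a * v.2) * A v) v = lam * (exp (-a * v.2) * A v) := by
  have hC := hA.contDiff_prod
  have heq := hA.eq (v.1, 0, v.2)
  simp only [solOp, iteratedDeriv_const, OfNat.ofNat_ne_zero, if_false] at heq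
  simp only [hypLap, iteratedDeriv_const_mul_field]
  have hline : ContDiff ℝ 2 fun t => A (v.1, t) := by fun_prop
  rw [iteratedDeriv_two_exp_mul_mul hline,
    (hasDerivAt_exp_mul_mul ((hline.differentiable (by norm_num)) v.2).hasDerivAt).deriv]
  linear_combination 1 / 2 * exp (-a * v.2) * heq

theorem positive_eigenfunction_decomposition (p q a lam : ℝ) (hp : 0 < p) (hq : 0 < q)
    (hlam : -a^2/2 ≤ lam) (h : ℝ × ℝ × ℝ → ℝ) (hC : ContDiff ℝ 2 h)
    (hpos : ∀ w, 0 < h w) (heig : ∀ w, solLap p q a h w = lam * h w) :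
    ∃ h₁ h₂ : ℝ × ℝ → ℝ,
      ContDiff ℝ 2 h₁ ∧ ContDiff ℝ 2 h₂ ∧
      (∀ u, 0 ≤ h₁ u) ∧ (∀ u, 0 ≤ h₂ u) ∧
      (∀ u, hypLap p a h₁ u = lam * h₁ u) ∧
      (∀ u, hypLap q (-a) h₂ u = lam * h₂ u) ∧
      ∀ w : ℝ × ℝ × ℝ, h w = h₁ (w.1, w.2.2) + h₂ (w.2.1, -w.2.2) := by
  obtain ⟨A, B, hA, hB, hA0, hB0, hAB⟩ :=
    (isSol_exp_mul_of_solLap_eq hC heig).exists_nonneg_add hp hq (by linarith)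
      fun w => mul_pos (exp_pos _) (hpos w)
  have hB' : IsSol q p (2 * lam + (-a) ^ 2) (fun w => B (w.1, -w.2.2)) := by
    rw [neg_sq]
    exact hB.swap
  have hAC := hA.contDiff_prod
  have hBC := IsSol.contDiff_prod (A := fun v => B (v.1, -v.2)) hB'
  refine ⟨fun v => exp (-a * v.2) * A v, fun v => exp (-(-a) * v.2) * B (v.1, -v.2),
    by fun_prop, ContDiff.mul (by fun_prop) hBC, fun v => mul_nonneg (exp_pos _).le (hA0 _),
    fun v => mul_nonneg (exp_pos _).le (hB0 _), hA.hypLap_exp_mul,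
    IsSol.hypLap_exp_mul (A := fun v => B (v.1, -v.2)) hB', fun w => ?_⟩
  have hw := hAB w.1 w.2.1 w.2.2
  simp only [neg_neg, mul_neg]
  rw [neg_mul, ← mul_add, ← hw, ← mul_assoc, ← exp_add, neg_add_cancel, exp_zero, one_mul]
end

section
/- Let p, q > 0 and a ∈ ℝ, and let Δ_a be the Laplacian with vertical drift a on Sol(p,q). Then every bounded C² function h : ℝ³ → ℝ with Δ_a h = 0 is constant, if and only if a = 0. (That is, Δ_a has the weak Liouville property precisely when the drift a vanishes.) -/
open Real

open Filter Topology

theorem iteratedDeriv_two_of_hasDerivAt {f f' : ℝ → ℝ} {x c : ℝ}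
    (hf : ∀ t, HasDerivAt f (f' t) t) (hf' : HasDerivAt f' c x) :
    iteratedDeriv 2 f x = c := by
  have : deriv f = f' := funext fun t => (hf t).deriv
  rw [iteratedDeriv_succ, iteratedDeriv_one, this, hf'.deriv]

theorem iteratedDeriv_two_comp_affine {f : ℝ → ℝ} (hf : ContDiff ℝ 2 f) (c s x : ℝ) :
    iteratedDeriv 2 (fun t => f (c + s * t)) x = s ^ 2 * iteratedDeriv 2 f (c + s * x) := by
  have hg : ContDiff ℝ 2 (fun t => f (c + t)) := by fun_prop
  have h := congrFun (iteratedDeriv_comp_const_mul (n := 2) hg s) x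
  rw [iteratedDeriv_comp_const_add] at h
  exact h

theorem IsLocalMax.iteratedDeriv_two_nonpos_s17 {f : ℝ → ℝ} {x : ℝ} (h : IsLocalMax f x)
    (hf : ContinuousAt f x) : iteratedDeriv 2 f x ≤ 0 := by
  rw [iteratedDeriv_succ, iteratedDeriv_one]
  by_contra! hpos
  have hmin := isLocalMin_of_deriv_deriv_pos hpos h.deriv_eq_zero hf
  have heq : f =ᶠ[𝓝 x] fun _ => f x := by
    filter_upwards [h, hmin] with t h₁ h₂ using le_antisymm h₁ h₂
  have := heq.deriv.deriv_eq
  simp at this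
  exact hpos.ne' this

theorem solLap_add_const_mul {f g : ℝ × ℝ × ℝ → ℝ} (hf : ContDiff ℝ 2 f) (hg : ContDiff ℝ 2 g)
    (p q a c : ℝ) (w : ℝ × ℝ × ℝ) :
    solLap p q a (fun w => f w + c * g w) w = solLap p q a f w + c * solLap p q a g w := by
  have key : ∀ u v : ℝ → ℝ, ContDiff ℝ 2 u → ContDiff ℝ 2 v → ∀ x,
      iteratedDeriv 2 (fun t => u t + c * v t) x
        = iteratedDeriv 2 u x + c * iteratedDeriv 2 v x := by
    intro u v hu hv x
    have hv' : ContDiff ℝ 2 (fun t => c * v t) := by fun_prop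
    have h := iteratedDeriv_add (n := 2) hu.contDiffAt (hv'.contDiffAt (x := x))
    rw [iteratedDeriv_const_mul_field] at h
    exact h
  have kd : ∀ u v : ℝ → ℝ, ContDiff ℝ 2 u → ContDiff ℝ 2 v → ∀ x,
      deriv (fun t => u t + c * v t) x = deriv u x + c * deriv v x := by
    intro u v hu hv x
    have h₁ := (hu.differentiable (by norm_num) x).hasDerivAt
    have h₂ := (hv.differentiable (by norm_num) x).hasDerivAt
    exact (h₁.add (h₂.const_mul c)).deriv
  simp only [solLap]
  rw [key (fun t => f (t, w.2.1, w.2.2)) (fun t => g (t, w.2.1, w.2.2))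
      (by fun_prop) (by fun_prop),
    key (fun t => f (w.1, t, w.2.2)) (fun t => g (w.1, t, w.2.2)) (by fun_prop) (by fun_prop),
    key (fun t => f (w.1, w.2.1, t)) (fun t => g (w.1, w.2.1, t)) (by fun_prop) (by fun_prop),
    kd (fun t => f (w.1, w.2.1, t)) (fun t => g (w.1, w.2.1, t)) (by fun_prop) (by fun_prop)]
  ring

/-- The horizontal translations and reflections are symmetries of the Laplacian. -/
theorem solLap_comp_affine {f : ℝ × ℝ × ℝ → ℝ} (hf : ContDiff ℝ 2 f) (p q a c d : ℝ)
    {s t : ℝ} (hs : s ^ 2 = 1) (ht : t ^ 2 = 1) (w : ℝ × ℝ × ℝ) :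
    solLap p q a (fun w => f (c + s * w.1, d + t * w.2.1, w.2.2)) w
      = solLap p q a f (c + s * w.1, d + t * w.2.1, w.2.2) := by
  simp only [solLap]
  rw [iteratedDeriv_two_comp_affine (f := fun r => f (r, d + t * w.2.1, w.2.2)) (by fun_prop),
    iteratedDeriv_two_comp_affine (f := fun r => f (c + s * w.1, r, w.2.2)) (by fun_prop),
    hs, ht]
  ring

/-- Exchanging the horizontal coordinates and reversing the vertical one. -/
def solSwap (w : ℝ × ℝ × ℝ) : ℝ × ℝ × ℝ := (w.2.1, w.1, -w.2.2)

@[fun_prop]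
theorem contDiff_solSwap {n : WithTop ℕ∞} : ContDiff ℝ n solSwap := by
  unfold solSwap
  fun_prop

@[simp]
theorem solSwap_solSwap (w : ℝ × ℝ × ℝ) : solSwap (solSwap w) = w := by
  simp [solSwap]

theorem solLap_comp_solSwap (p q a : ℝ) (f : ℝ × ℝ × ℝ → ℝ) (w : ℝ × ℝ × ℝ) :
    solLap p q a (fun w => f (solSwap w)) w = solLap q p (-a) f (solSwap w) := by
  simp only [solLap, solSwap]
  rw [iteratedDeriv_comp_neg 2 (fun r => f (w.2.1, w.1, r)),
    deriv_comp_neg (fun r => f (w.2.1, w.1, r))]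
  simp only [even_two, Even.neg_pow, one_pow, one_smul, mul_neg, neg_neg]
  ring

/-- The Laplacian of a function of the invariant `(c + p x) e^{-p z}`. -/
theorem solLap_profile {F F' F'' : ℝ → ℝ} (hF : ∀ t, HasDerivAt F (F' t) t)
    (hF' : ∀ t, HasDerivAt F' (F'' t) t) (p q a c : ℝ) (w : ℝ × ℝ × ℝ) {T : ℝ}
    (hT : T = (c + p * w.1) * exp (-(p * w.2.2))) :
    solLap p q a (fun w => F ((c + p * w.1) * exp (-(p * w.2.2)))) w
      = (1 / 2) * p * (p * (1 + T ^ 2) * F'' T + (p - 2 * a) * (T * F' T)) := by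
  have hx : ∀ t, HasDerivAt (fun t => (c + p * t) * exp (-(p * w.2.2)))
      (p * exp (-(p * w.2.2))) t := fun t => by
    simpa using ((((hasDerivAt_id t).const_mul p).const_add c).mul_const (exp (-(p * w.2.2))))
  have hz : ∀ t, HasDerivAt (fun t => (c + p * w.1) * exp (-(p * t)))
      (-p * ((c + p * w.1) * exp (-(p * t)))) t := fun t => by
    refine (((hasDerivAt_id' t).const_mul p).fun_neg.exp.const_mul (c + p * w.1)).congr_deriv ?_
    ring
  have h₁ := iteratedDeriv_two_of_hasDerivAt (fun t => (hF _).comp t (hx t))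
    (((hF' _).comp w.1 (hx w.1)).mul_const (p * exp (-(p * w.2.2))))
  have h₂ := iteratedDeriv_two_of_hasDerivAt (fun t => (hF _).comp t (hz t))
    (((hF' _).comp w.2.2 (hz w.2.2)).mul ((hz w.2.2).const_mul (-p)))
  have h₃ := ((hF _).comp w.2.2 (hz w.2.2)).deriv
  simp only [Function.comp_def] at h₁ h₂ h₃
  simp only [solLap]
  rw [h₁, h₂, h₃, iteratedDeriv_const, ← hT]
  have he : exp (2 * p * w.2.2) * (exp (-(p * w.2.2)) * exp (-(p * w.2.2))) = 1 := by
    rw [← exp_add, ← exp_add, ← exp_zero]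
    ring_nf
  simp only [OfNat.ofNat_ne_zero, if_false]
  linear_combination (1 / 2) * p ^ 2 * F'' T * he

theorem hasDerivAt_inv_sqrt_one_add_sq (t : ℝ) :
    HasDerivAt (fun t : ℝ => (√(1 + t ^ 2))⁻¹) (-t / ((1 + t ^ 2) * √(1 + t ^ 2))) t := by
  have hpos : 0 < 1 + t ^ 2 := by positivity
  refine ((((hasDerivAt_id' t).fun_pow 2).const_add 1).sqrt hpos.ne').fun_inv
    (sqrt_pos.2 hpos).ne' |>.congr_deriv ?_
  rw [sq_sqrt hpos.le]
  field_simp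
  simp

/-- A positive function on `{x ≥ 0}`, strictly superharmonic for zero drift and proper in
`(x, z)`. -/
noncomputable def solBarrier (p : ℝ) (w : ℝ × ℝ × ℝ) : ℝ :=
  (p * w.2.2 + 2 * arsinh ((1 + p * w.1) * exp (-(p * w.2.2)))) + 1 * arsinh (1 + p * w.1)

@[fun_prop]
theorem contDiff_solBarrier (p : ℝ) {n : WithTop ℕ∞} : ContDiff ℝ n (solBarrier p) := by
  unfold solBarrier
  fun_prop

theorem solLap_solBarrier_neg {p : ℝ} (hp : 0 < p) (q : ℝ) {w : ℝ × ℝ × ℝ} (hw : 0 ≤ w.1) :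
    solLap p q 0 (solBarrier p) w < 0 := by
  have h₀ : solLap p q 0 (fun w => p * w.2.2) w = 0 := by
    have : iteratedDeriv 2 (fun t => p * t) w.2.2 = 0 :=
      iteratedDeriv_two_of_hasDerivAt
        (fun t => (by simpa using (hasDerivAt_id t).const_mul p : HasDerivAt _ p t))
        (hasDerivAt_const _ _)
    simp only [solLap, iteratedDeriv_const, this]
    simp
  have h₁ : solLap p q 0 (fun w => arsinh ((1 + p * w.1) * exp (-(p * w.2.2)))) w = 0 := by
    rw [solLap_profile hasDerivAt_arsinh hasDerivAt_inv_sqrt_one_add_sq p q 0 1 w rfl]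
    set T := (1 + p * w.1) * exp (-(p * w.2.2))
    have : 0 < √(1 + T ^ 2) := by positivity
    have : 0 < 1 + T ^ 2 := by positivity
    field_simp
    ring
  have h₂ : solLap p q 0 (fun w => arsinh (1 + p * w.1)) w < 0 := by
    have hx : ∀ t, HasDerivAt (fun t => 1 + p * t) p t := fun t => by
      simpa using ((hasDerivAt_id t).const_mul p).const_add 1
    have := iteratedDeriv_two_of_hasDerivAt (fun t => (hasDerivAt_arsinh _).comp t (hx t))
      (((hasDerivAt_inv_sqrt_one_add_sq _).comp w.1 (hx w.1)).mul_const p)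
    simp only [Function.comp_def] at this
    simp only [solLap, iteratedDeriv_const, this]
    have hX : 0 < 1 + p * w.1 := by positivity
    have : 0 < exp (2 * p * w.2.2) *
      ((1 + p * w.1) / ((1 + (1 + p * w.1) ^ 2) * √(1 + (1 + p * w.1) ^ 2)) * p * p) := by
      positivity
    simp only [neg_div]
    simp
    linarith
  have e₁ : solLap p q 0 (solBarrier p) w = _ :=
    solLap_add_const_mul
      (f := fun w => p * w.2.2 + 2 * arsinh ((1 + p * w.1) * exp (-(p * w.2.2))))
      (g := fun w => arsinh (1 + p * w.1)) (by fun_prop) (by fun_prop) p q 0 1 w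
  have e₂ := solLap_add_const_mul (f := fun w => p * w.2.2)
    (g := fun w => arsinh ((1 + p * w.1) * exp (-(p * w.2.2))))
    (by fun_prop) (by fun_prop) p q 0 2 w
  rw [e₁, e₂, h₀, h₁]
  linarith

theorem log_two_mul_le_arsinh {s : ℝ} (hs : 0 < s) : log (2 * s) ≤ arsinh s := by
  rw [arsinh]
  apply log_le_log (by positivity)
  have : s ≤ √(1 + s ^ 2) := le_sqrt_of_sq_le (by linarith)
  linarith

theorem solBarrier_lower_bounds {p : ℝ} (hp : 0 < p) {w : ℝ × ℝ × ℝ} (hw : 0 ≤ w.1) :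
    0 ≤ solBarrier p w ∧ p * w.2.2 ≤ solBarrier p w ∧ -(p * w.2.2) ≤ solBarrier p w ∧
      log (1 + p * w.1) ≤ solBarrier p w := by
  have hX : 0 < 1 + p * w.1 := by positivity
  have hXlog : 0 ≤ log (1 + p * w.1) := log_nonneg (by nlinarith)
  have hT : 0 < (1 + p * w.1) * exp (-(p * w.2.2)) := by positivity
  have h₁ : 0 ≤ arsinh (1 + p * w.1) := arsinh_nonneg_iff.2 hX.le
  have h₂ := arsinh_nonneg_iff.2 hT.le
  have h₃ := log_two_mul_le_arsinh hT
  have h₄ : 0 < log 2 := log_pos (by norm_num)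
  rw [log_mul (by norm_num) hT.ne', log_mul hX.ne' (exp_pos _).ne', log_exp] at h₃
  unfold solBarrier
  refine ⟨?_, ?_, ?_, ?_⟩ <;> linarith

/-- A sublevel set of the barrier on `{x ≥ 0}` is bounded in `x` and `z`. -/
theorem abs_le_of_solBarrier_le {p : ℝ} (hp : 0 < p) {w : ℝ × ℝ × ℝ} (hw : 0 ≤ w.1) {M : ℝ}
    (hM : solBarrier p w ≤ M) : w.1 ≤ exp M / p ∧ |w.2.2| ≤ M / p := by
  obtain ⟨-, h₁, h₂, h₃⟩ := solBarrier_lower_bounds hp hw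
  have h₄ : 1 + p * w.1 ≤ exp M := (log_le_iff_le_exp (by positivity)).1 (h₃.trans hM)
  refine ⟨(le_div_iff₀ hp).2 (by linarith), abs_le.2 ⟨?_, (le_div_iff₀ hp).2 (by linarith)⟩⟩
  rw [← neg_div]
  exact (div_le_iff₀ hp).2 (by linarith)

theorem solLap_nonpos_of_isLocalMax {v : ℝ × ℝ × ℝ → ℝ} (hv : Continuous v) (p q : ℝ)
    {w : ℝ × ℝ × ℝ} (hx : IsLocalMax (fun t => v (t, w.2.1, w.2.2)) w.1)
    (hy : IsLocalMax (fun t => v (w.1, t, w.2.2)) w.2.1)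
    (hz : IsLocalMax (fun t => v (w.1, w.2.1, t)) w.2.2) : solLap p q 0 v w ≤ 0 := by
  have h₁ := hx.iteratedDeriv_two_nonpos_s17 (by fun_prop)
  have h₂ := hy.iteratedDeriv_two_nonpos_s17 (by fun_prop)
  have h₃ := hz.iteratedDeriv_two_nonpos_s17 (by fun_prop)
  have e₁ := mul_nonpos_of_nonneg_of_nonpos (exp_pos (2 * p * w.2.2)).le h₁
  have e₂ := mul_nonpos_of_nonneg_of_nonpos (exp_pos (-(2 * q * w.2.2))).le h₂
  simp only [solLap]
  linarith

/-- A Phragmén–Lindelöf principle: a bounded function is nonpositive on `S` if its perturbations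
by a proper nonnegative function have no maximum on `S` at which it is positive. -/
theorem nonpos_of_proper_barrier {E : Type*} [TopologicalSpace E] {S : Set E} (hS : IsClosed S)
    {u φ : E → ℝ} (hu : Continuous u) (hφ : Continuous φ) {C : ℝ} (hC : ∀ w ∈ S, u w ≤ C)
    (hφ0 : ∀ w ∈ S, 0 ≤ φ w) (hK : ∀ M, ∃ K, IsCompact K ∧ ∀ w ∈ S, φ w ≤ M → w ∈ K)
    (hmax : ∀ ε > 0, ∀ w ∈ S, 0 < u w → ¬ IsMaxOn (fun w => u w + -ε * φ w) S w) :
    ∀ w ∈ S, u w ≤ 0 := by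
  intro w₀ hw₀
  by_contra! hpos
  set ε := u w₀ / (2 * (φ w₀ + 1)) with hε
  have hφ₀ := hφ0 w₀ hw₀
  have hε0 : 0 < ε := by positivity
  have hv₀ : 0 < u w₀ + -ε * φ w₀ := by
    have : ε * (2 * (φ w₀ + 1)) = u w₀ := by rw [hε]; field_simp
    nlinarith
  obtain ⟨K, hKc, hKS⟩ := hK (C / ε)
  have hmem : ∀ w ∈ S, 0 < u w + -ε * φ w → w ∈ S ∩ K := fun w hw h =>
    ⟨hw, hKS w hw ((le_div_iff₀ hε0).2 (by linarith [hC w hw]))⟩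
  obtain ⟨w, hw, hwmax⟩ := (hKc.inter_left hS).exists_isMaxOn ⟨w₀, hmem w₀ hw₀ hv₀⟩
    (f := fun w => u w + -ε * φ w) (by fun_prop)
  have hvw : 0 < u w + -ε * φ w := hv₀.trans_le (hwmax (hmem w₀ hw₀ hv₀))
  refine hmax ε hε0 w hw.1 (by nlinarith [hφ0 w hw.1]) fun w' hw' => ?_
  by_cases h : 0 < u w' + -ε * φ w'
  · exact hwmax (hmem w' hw' h)
  · exact (not_lt.1 h).trans hvw.le

/-- Bounded `C²` harmonic functions for the Laplacian without drift. -/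
structure IsBddSolHarmonic (p q : ℝ) (h : ℝ × ℝ × ℝ → ℝ) : Prop where
  contDiff : ContDiff ℝ 2 h
  bdd : ∃ C : ℝ, ∀ w, |h w| ≤ C
  harmonic : ∀ w, solLap p q 0 h w = 0

namespace IsBddSolHarmonic

variable {p q : ℝ} {f h : ℝ × ℝ × ℝ → ℝ}

theorem add_const_mul (hf : IsBddSolHarmonic p q f) (hh : IsBddSolHarmonic p q h) (c : ℝ) :
    IsBddSolHarmonic p q (fun w => f w + c * h w) where
  contDiff := by
    have := hf.contDiff
    have := hh.contDiff
    fun_prop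
  bdd := by
    obtain ⟨A, hA⟩ := hf.bdd
    obtain ⟨B, hB⟩ := hh.bdd
    refine ⟨A + |c| * B, fun w => (abs_add_le _ _).trans ?_⟩
    rw [abs_mul]
    have := hA w
    have := hB w
    gcongr
  harmonic w := by
    rw [solLap_add_const_mul hf.contDiff hh.contDiff, hf.harmonic, hh.harmonic]
    simp

theorem neg (hh : IsBddSolHarmonic p q h) : IsBddSolHarmonic p q (fun w => -h w) := by
  convert hh.add_const_mul hh (-2) using 2
  ring

theorem comp_affine (hh : IsBddSolHarmonic p q h) (c d : ℝ) {s t : ℝ} (hs : s ^ 2 = 1)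
    (ht : t ^ 2 = 1) :
    IsBddSolHarmonic p q (fun w => h (c + s * w.1, d + t * w.2.1, w.2.2)) where
  contDiff := by
    have := hh.contDiff
    fun_prop
  bdd := hh.bdd.imp fun C hC w => hC _
  harmonic w := by
    rw [solLap_comp_affine hh.contDiff _ _ _ _ _ hs ht, hh.harmonic]

theorem comp_solSwap (hh : IsBddSolHarmonic p q h) :
    IsBddSolHarmonic q p (fun w => h (solSwap w)) where
  contDiff := hh.contDiff.comp contDiff_solSwap
  bdd := hh.bdd.imp fun C hC w => hC _
  harmonic w := by
    rw [solLap_comp_solSwap, neg_zero, hh.harmonic]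

theorem nonpos_of_quadrant (hp : 0 < p) (hq : 0 < q) (hh : IsBddSolHarmonic p q h)
    (hx : ∀ y z, h (0, y, z) ≤ 0) (hy : ∀ x z, h (x, 0, z) ≤ 0) {x y : ℝ} (hx0 : 0 ≤ x)
    (hy0 : 0 ≤ y) (z : ℝ) : h (x, y, z) ≤ 0 := by
  have hc := hh.contDiff
  obtain ⟨C, hC⟩ := hh.bdd
  set φ : ℝ × ℝ × ℝ → ℝ := fun w => solBarrier p w + 1 * solBarrier q (solSwap w) with hφ
  have hφc : ContDiff ℝ 2 φ := by fun_prop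
  refine nonpos_of_proper_barrier (S := {w | 0 ≤ w.1 ∧ 0 ≤ w.2.1}) (u := h) (φ := φ) (C := C)
    ?_ hc.continuous hφc.continuous (fun w _ => (le_abs_self _).trans (hC w)) ?_ ?_ ?_
    (x, y, z) ⟨hx0, hy0⟩
  · exact (isClosed_le continuous_const continuous_fst).inter
      (isClosed_le continuous_const (continuous_fst.comp continuous_snd))
  · rintro w ⟨h₁, h₂⟩
    have e₁ := (solBarrier_lower_bounds hp h₁).1
    have e₂ := (solBarrier_lower_bounds hq (w := solSwap w) h₂).1
    simp only [hφ]
    linarith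
  · intro M
    refine ⟨Set.Icc 0 (exp M / p) ×ˢ Set.Icc 0 (exp M / q) ×ˢ Set.Icc (-(M / p)) (M / p),
      isCompact_Icc.prod (isCompact_Icc.prod isCompact_Icc), ?_⟩
    rintro w ⟨h₁, h₂⟩ hM
    have e₁ := (solBarrier_lower_bounds hp h₁).1
    have e₂ := (solBarrier_lower_bounds hq (w := solSwap w) h₂).1
    simp only [hφ] at hM
    obtain ⟨b₁, b₂⟩ := abs_le_of_solBarrier_le hp h₁ (M := M) (by linarith)
    obtain ⟨b₃, -⟩ := abs_le_of_solBarrier_le hq (w := solSwap w) h₂ (M := M) (by linarith)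
    exact ⟨⟨h₁, b₁⟩, ⟨h₂, b₃⟩, abs_le.1 b₂⟩
  · rintro ε hε ⟨x, y, z⟩ ⟨h₁, h₂⟩ hpos hmax
    simp only at h₁ h₂
    have h₁' : 0 < x := h₁.lt_of_ne (by rintro rfl; exact (hx y z).not_gt hpos)
    have h₂' : 0 < y := h₂.lt_of_ne (by rintro rfl; exact (hy x z).not_gt hpos)
    have hle := solLap_nonpos_of_isLocalMax (v := fun w => h w + -ε * φ w)
      (hc.continuous.add (hφc.continuous.const_mul _)) p q (w := (x, y, z))
      (by filter_upwards [lt_mem_nhds h₁'] with t ht using hmax ⟨le_of_lt ht, h₂⟩)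
      (by filter_upwards [lt_mem_nhds h₂'] with t ht using hmax ⟨h₁, le_of_lt ht⟩)
      (Eventually.of_forall fun t => hmax ⟨h₁, h₂⟩)
    have e₁ := solLap_solBarrier_neg hp q (w := (x, y, z)) h₁
    have e₂ := solLap_solBarrier_neg hq p (w := solSwap (x, y, z)) h₂
    rw [solLap_add_const_mul hc hφc, hh.harmonic, hφ,
      solLap_add_const_mul (by fun_prop) (by fun_prop), solLap_comp_solSwap, neg_zero] at hle
    nlinarith

theorem nonpos_of_halfSpace (hp : 0 < p) (hh : IsBddSolHarmonic p q h)
    (hx : ∀ y z, h (0, y, z) ≤ 0) (hy : ∀ x y y' z, h (x, y, z) = h (x, y', z)) {x : ℝ}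
    (hx0 : 0 ≤ x) (y z : ℝ) : h (x, y, z) ≤ 0 := by
  have hc := hh.contDiff
  obtain ⟨C, hC⟩ := hh.bdd
  have hφc : ContDiff ℝ 2 (solBarrier p) := by fun_prop
  refine nonpos_of_proper_barrier (S := {w | 0 ≤ w.1 ∧ w.2.1 = y}) (u := h) (φ := solBarrier p)
    (C := C) ?_ hc.continuous hφc.continuous (fun w _ => (le_abs_self _).trans (hC w))
    (fun w hw => (solBarrier_lower_bounds hp hw.1).1) ?_ ?_ (x, y, z) ⟨hx0, rfl⟩
  · exact (isClosed_le continuous_const continuous_fst).inter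
      (isClosed_eq (continuous_fst.comp continuous_snd) continuous_const)
  · intro M
    refine ⟨Set.Icc 0 (exp M / p) ×ˢ {y} ×ˢ Set.Icc (-(M / p)) (M / p),
      isCompact_Icc.prod (isCompact_singleton.prod isCompact_Icc), ?_⟩
    rintro w ⟨h₁, h₂⟩ hM
    obtain ⟨b₁, b₂⟩ := abs_le_of_solBarrier_le hp h₁ hM
    exact ⟨⟨h₁, b₁⟩, h₂, abs_le.1 b₂⟩
  · rintro ε hε ⟨x, y, z⟩ ⟨h₁, h₂⟩ hpos hmax
    simp only at h₁ h₂
    subst h₂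
    have h₁' : 0 < x := h₁.lt_of_ne (by rintro rfl; exact (hx y z).not_gt hpos)
    have hle := solLap_nonpos_of_isLocalMax (v := fun w => h w + -ε * solBarrier p w)
      (hc.continuous.add (hφc.continuous.const_mul _)) p q (w := (x, y, z))
      (by filter_upwards [lt_mem_nhds h₁'] with t ht using hmax ⟨le_of_lt ht, rfl⟩)
      (Eventually.of_forall fun t => by simp only [hy x t y z, solBarrier, le_refl])
      (Eventually.of_forall fun t => hmax ⟨h₁, rfl⟩)
    have e₁ := solLap_solBarrier_neg hp q (w := (x, y, z)) h₁
    rw [solLap_add_const_mul hc hφc, hh.harmonic] at hle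
    nlinarith

theorem mixed_difference_nonpos (hp : 0 < p) (hq : 0 < q) (hh : IsBddSolHarmonic p q h)
    {x x' y y' : ℝ} (hx : x ≤ x') (hy : y ≤ y') (z : ℝ) :
    h (x', y', z) + h (x, y, z) ≤ h (x, y', z) + h (x', y, z) := by
  have one : (1 : ℝ) ^ 2 = 1 := by norm_num
  have neg_one : (-1 : ℝ) ^ 2 = 1 := by norm_num
  set c := (x + x') / 2 with hc
  set d := (y + y') / 2 with hd
  have hu := (((hh.comp_affine c d one one).add_const_mul
    (hh.comp_affine c d neg_one neg_one) 1).add_const_mul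
    (hh.comp_affine c d neg_one one) (-1)).add_const_mul (hh.comp_affine c d one neg_one) (-1)
  have key := hu.nonpos_of_quadrant hp hq (fun y z => by simp) (fun x z => by simp)
    (x := (x' - x) / 2) (y := (y' - y) / 2) (by linarith) (by linarith) z
  have e₁ : c + 1 * ((x' - x) / 2) = x' := by rw [hc]; ring
  have e₂ : c + -1 * ((x' - x) / 2) = x := by rw [hc]; ring
  have e₃ : d + 1 * ((y' - y) / 2) = y' := by rw [hd]; ring
  have e₄ : d + -1 * ((y' - y) / 2) = y := by rw [hd]; ring
  simp only [e₁, e₂, e₃, e₄] at key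
  linarith

theorem mixed_difference_eq (hp : 0 < p) (hq : 0 < q) (hh : IsBddSolHarmonic p q h)
    {x x' : ℝ} (hx : x ≤ x') (y y' z : ℝ) :
    h (x', y', z) - h (x, y', z) = h (x', y, z) - h (x, y, z) := by
  wlog hy : y ≤ y' generalizing y y'
  · exact (this y' y (le_of_not_ge hy)).symm
  have h₁ := hh.mixed_difference_nonpos hp hq hx hy z
  have h₂ := hh.neg.mixed_difference_nonpos hp hq hx hy z
  linarith

theorem antitone_fst (hp : 0 < p) (hq : 0 < q) (hh : IsBddSolHarmonic p q h)
    {x x' : ℝ} (hx : x ≤ x') (y z : ℝ) : h (x', y, z) ≤ h (x, y, z) := by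
  have one : (1 : ℝ) ^ 2 = 1 := by norm_num
  have neg_one : (-1 : ℝ) ^ 2 = 1 := by norm_num
  set c := (x + x') / 2 with hc
  have hu := (hh.comp_affine c 0 one one).add_const_mul (hh.comp_affine c 0 neg_one one) (-1)
  have key := hu.nonpos_of_halfSpace hp (fun y z => by simp) (fun r y y' z => ?_)
    (x := (x' - x) / 2) (by linarith) y z
  · have e₁ : c + 1 * ((x' - x) / 2) = x' := by rw [hc]; ring
    have e₂ : c + -1 * ((x' - x) / 2) = x := by rw [hc]; ring
    simp only [e₁, e₂] at key
    simp only [zero_add, one_mul] at key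
    linarith
  · rcases le_total (c + -1 * r) (c + 1 * r) with hr | hr
    · have := hh.mixed_difference_eq hp hq hr (0 + 1 * y) (0 + 1 * y') z
      linarith
    · have := hh.mixed_difference_eq hp hq hr (0 + 1 * y) (0 + 1 * y') z
      linarith

theorem independent_of_fst (hp : 0 < p) (hq : 0 < q) (hh : IsBddSolHarmonic p q h)
    (x x' y z : ℝ) : h (x, y, z) = h (x', y, z) := by
  wlog hx : x ≤ x' generalizing x x'
  · exact (this x' x (le_of_not_ge hx)).symm
  have h₁ := hh.antitone_fst hp hq hx y z
  have h₂ := hh.neg.antitone_fst hp hq hx y z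
  linarith

theorem eq_const (hp : 0 < p) (hq : 0 < q) (hh : IsBddSolHarmonic p q h)
    (w w' : ℝ × ℝ × ℝ) : h w = h w' := by
  set g : ℝ → ℝ := fun z => h (0, 0, z) with hg
  have hhg : ∀ x y z, h (x, y, z) = g z := fun x y z => by
    have := hh.comp_solSwap.independent_of_fst hq hp y 0 0 (-z)
    simp only [solSwap, neg_neg] at this
    rw [hh.independent_of_fst hp hq x 0 y z, this]
  have hgc : ContDiff ℝ 2 g := by
    have := hh.contDiff
    fun_prop
  have hg2 : ∀ z, deriv (deriv g) z = 0 := fun z => by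
    have := hh.harmonic (0, 0, z)
    simp only [solLap, hhg, iteratedDeriv_const] at this
    rw [iteratedDeriv_succ, iteratedDeriv_one] at this
    simpa using this
  have hd : Differentiable ℝ g := hgc.differentiable (by norm_num)
  have hd' : Differentiable ℝ (deriv g) := by
    have : ContDiff ℝ (1 + 1) g := by simpa [one_add_one_eq_two] using hgc
    exact (contDiff_succ_iff_deriv.1 this).2.2.differentiable (by norm_num)
  set m := deriv g 0 with hm
  have hd0 : ∀ z, deriv g z = m := fun z => is_const_of_deriv_eq_zero hd' hg2 z 0
  have hlin : ∀ z, g z = g 0 + m * z := fun z => by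
    have hder : ∀ t, HasDerivAt (fun t => g t - m * t) 0 t := fun t => by
      refine ((hd t).hasDerivAt.fun_sub ((hasDerivAt_id' t).const_mul m)).congr_deriv ?_
      rw [hd0, mul_one, sub_self]
    have := is_const_of_deriv_eq_zero (fun t => (hder t).differentiableAt)
      (fun t => (hder t).deriv) z 0
    linarith
  obtain ⟨C, hC⟩ := hh.bdd
  have hm0 : m = 0 := by
    by_contra hne
    have h₁ := hC (0, 0, (2 * C + 1) / m)
    have h₂ := hC (0, 0, 0)
    rw [hhg, hlin, mul_div_cancel₀ _ hne, abs_le] at h₁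
    rw [hhg, abs_le] at h₂
    linarith
  obtain ⟨x, y, z⟩ := w
  obtain ⟨x', y', z'⟩ := w'
  rw [hhg, hhg, hlin z, hlin z', hm0]
  ring

end IsBddSolHarmonic

/-- For negative drift, the primitive of `(1 + t²)^{-(1/2 - a/p)}` evaluated at `p x e^{-p z}` is
a nonconstant bounded harmonic function. -/
theorem exists_nonconstant_bounded_harmonic {p : ℝ} (hp : 0 < p) (q : ℝ) {a : ℝ} (ha : a < 0) :
    ∃ h : ℝ × ℝ × ℝ → ℝ, ContDiff ℝ 2 h ∧ (∃ C : ℝ, ∀ w, |h w| ≤ C) ∧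
      (∀ w, solLap p q a h w = 0) ∧ ∃ w w', h w ≠ h w' := by
  set b : ℝ := 1 / 2 - a / p with hb
  have hap : a / p < 0 := div_neg_of_neg_of_pos ha hp
  set f : ℝ → ℝ := fun t => (1 + t ^ 2) ^ (-b) with hf
  have hpos : ∀ t : ℝ, 0 < 1 + t ^ 2 := fun t => by positivity
  have hfc : ContDiff ℝ 1 f :=
    (contDiff_const.add (contDiff_id.pow 2)).rpow_const_of_ne fun t => (hpos t).ne'
  have hfi : MeasureTheory.Integrable f := by
    have := integrable_rpow_neg_one_add_norm_sq (E := ℝ) (μ := MeasureTheory.volume)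
      (r := 2 * b) (by simp; linarith)
    convert this using 3 with t
    · simp
    · ring
  set F : ℝ → ℝ := fun T => ∫ t in (0 : ℝ)..T, f t with hF
  have hFd : ∀ T, HasDerivAt F (f T) T := fun T =>
    intervalIntegral.integral_hasDerivAt_right (hfc.continuous.intervalIntegrable _ _)
      (hfc.continuous.stronglyMeasurableAtFilter _ _) hfc.continuous.continuousAt
  have hfd : ∀ T, HasDerivAt f (2 * T * -b * (1 + T ^ 2) ^ (-b - 1)) T := fun T => by
    have := (((hasDerivAt_id T).pow 2).const_add 1).rpow_const (p := -b) (Or.inl (hpos T).ne')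
    simpa using this
  have hFc : ContDiff ℝ 2 F := by
    rw [← one_add_one_eq_two, contDiff_succ_iff_deriv]
    refine ⟨fun T => (hFd T).differentiableAt, by simp, ?_⟩
    rwa [show deriv F = f from funext fun T => (hFd T).deriv]
  refine ⟨fun w => F ((0 + p * w.1) * exp (-(p * w.2.2))), by fun_prop,
    ⟨∫ t, ‖f t‖, fun w => ?_⟩, fun w => ?_, ?_⟩
  · exact intervalIntegral.norm_integral_le_integral_norm_uIoc.trans
      (MeasureTheory.setIntegral_le_integral hfi.norm (Eventually.of_forall fun t => norm_nonneg _))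
  · rw [solLap_profile hFd hfd p q a 0 w rfl]
    set T := (0 + p * w.1) * exp (-(p * w.2.2))
    have e : (1 + T ^ 2) * (1 + T ^ 2) ^ (-b - 1) = f T := by
      rw [rpow_sub_one (hpos T).ne', mul_div_cancel₀ _ (hpos T).ne']
    have hpb : 2 * p * b = p - 2 * a := by
      rw [hb]
      field_simp
    linear_combination (-(1 / 2) * p * p * 2 * T * b) * e - (1 / 2) * p * T * f T * hpb
  · by_contra! hcon
    have hconst : ∀ T, F T = F 0 := fun T => by
      have := hcon (T / p, 0, 0) (0, 0, 0)
      simpa [mul_div_cancel₀ _ hp.ne'] using this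
    have h₀ := (hFd 0).unique
      ((hasDerivAt_const (0 : ℝ) (F 0)).congr_of_eventuallyEq (Eventually.of_forall hconst))
    simp [hf] at h₀

theorem weak_liouville_iff_zero_drift (p q a : ℝ) (hp : 0 < p) (hq : 0 < q) :
    (∀ h : ℝ × ℝ × ℝ → ℝ, ContDiff ℝ 2 h → (∃ C : ℝ, ∀ w, |h w| ≤ C) →
      (∀ w, solLap p q a h w = 0) → ∀ w w' : ℝ × ℝ × ℝ, h w = h w') ↔ a = 0 := by
  constructor
  · intro H
    rcases lt_trichotomy a 0 with ha | ha | ha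
    · obtain ⟨h, hc, hb, hh, w, w', hne⟩ := exists_nonconstant_bounded_harmonic hp q ha
      exact absurd (H h hc hb hh w w') hne
    · exact ha
    · obtain ⟨h, hc, hb, hh, w, w', hne⟩ :=
        exists_nonconstant_bounded_harmonic hq p (neg_lt_zero.2 ha)
      refine absurd (H (fun w => h (solSwap w)) (hc.comp contDiff_solSwap)
        (hb.imp fun C hC w => hC _) (fun w => ?_) (solSwap w) (solSwap w')) (by simpa using hne)
      rw [solLap_comp_solSwap, hh]
  · rintro rfl h hc hb hh w w'
    exact IsBddSolHarmonic.eq_const hp hq ⟨hc, hb, hh⟩ w w'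
end
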